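/- arXiv:1906.03296 — 2 statements merged into one kernel-verified Lean document; each statement's English description precedes it below -/
import Mathlib

section
/- Let Π be a hyperplane of PG(4,q) distinct from Σ∞. Then Π contains exactly one line [T] of the regular spread S, and there is an ℓ∞-Baer pencil 𝒦 of PG(2,q²) with vertex T̄ whose affine points are mapped by the Bruck–Bose map φ bijectively onto the affine points of Π. Conversely, for every ℓ∞-Baer pencil 𝒦 of PG(2,q²) there is a hyperplane Π ≠ Σ∞ of PG(4,q) whose affine points are exactly the φ-images of the affine points of 𝒦. -/
open scoped Classical
open Matrix

noncomputable section

namespace BaerConics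

/-- Points of the projective space `PG(n-1, K)` as projectivization of `Fin n → K`. -/
abbrev PP (K : Type) [Field K] (n : ℕ) : Type := Projectivization K (Fin n → K)

variable {K : Type} [Field K] {m n : ℕ}

/-- The (at most one) projective point determined by a vector:  empty if `v = 0`,
and the singleton `{[v]}` otherwise. -/
def projPt (v : Fin n → K) : Set (PP K n) :=
  {p | ∃ h : v ≠ 0, p = Projectivization.mk K v h}

/-- The set of projective points lying in a linear subspace. -/
def ptsOf (W : Submodule K (Fin n → K)) : Set (PP K n) :=
  {p | p.rep ∈ W}

/-- The projective line through two points (as the set of points of the span). -/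
def lineTh (P Q : PP K n) : Set (PP K n) :=
  ptsOf (Submodule.span K {P.rep, Q.rep})

/-- `X` is a projective flat of projective dimension `d`. -/
def IsFlat (d : ℕ) (X : Set (PP K n)) : Prop :=
  ∃ W : Submodule K (Fin n → K), Module.finrank K W = d + 1 ∧ X = ptsOf W

/-- Image of a set of vectors under the projective map induced by a matrix. -/
def mimg (M : Matrix (Fin m) (Fin n) K) (X : Set (Fin n → K)) : Set (PP K m) :=
  {p | ∃ v ∈ X, p ∈ projPt (M.mulVec v)}

/-- Coordinatewise application of a ring homomorphism to a vector. -/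
def mapVec {L : Type} [Field L] (σ : K →+* L) (v : Fin n → K) : Fin n → L :=
  fun i => σ (v i)

lemma mulVec_inj (M : Matrix (Fin n) (Fin n) K) (hM : IsUnit M.det) :
    Function.Injective M.mulVec := by
  intro a b hab
  have h := congrArg (fun v => M⁻¹.mulVec v) hab
  simpa [Matrix.mulVec_mulVec, Matrix.nonsing_inv_mul M hM] using h

/-- The projective transformation induced by an invertible matrix. -/
def pmap (M : Matrix (Fin n) (Fin n) K) (hM : IsUnit M.det) (p : PP K n) : PP K n :=
  Projectivization.mk K (M.mulVec p.rep) (by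
    intro h
    apply p.rep_nonzero
    have h0 : M.mulVec p.rep = M.mulVec 0 := by simpa [Matrix.mulVec_zero] using h
    exact mulVec_inj M hM h0)

/-- The map induced on projective points by the coordinatewise `q`-power map. -/
def frobPt (q : ℕ) (p : PP K n) : PP K n :=
  Projectivization.mk K (fun i => p.rep i ^ q) (by
    obtain ⟨i, hi⟩ := Function.ne_iff.mp p.rep_nonzero
    intro h
    exact pow_ne_zero q (by simpa using hi) (by simpa using congrFun h i))

/-- The line at infinity `z = 0` of `PG(2, K)`. -/
def linf (K : Type) [Field K] : Set (PP K 3) := {p | p.rep 2 = 0}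

/-- Coordinatewise application of the algebra map to a vector. -/
def algVec (F : Type) {K : Type} [Field F] [Field K] [Algebra F K] {n : ℕ}
    (v : Fin n → F) : Fin n → K := fun i => algebraMap F K (v i)

/-- Vectors representing the points of the standard Baer subline of `ℓ∞`. -/
def sublineVecs (F K : Type) [Field F] [Field K] [Algebra F K] : Set (Fin 3 → K) :=
  {v | ∃ θ : F, v = ![algebraMap F K θ, 1, 0]} ∪ {![1, 0, 0]}

/-- Nonzero vectors representing the points of `ℓ∞`. -/
def linfVecs (K : Type) [Field K] : Set (Fin 3 → K) := {v | v ≠ 0 ∧ v 2 = 0}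

/-- Vectors with all coordinates in (the image of) `F`, representing the canonical
Baer subplane. -/
def subplaneVecs (F K : Type) [Field F] [Field K] [Algebra F K] : Set (Fin 3 → K) :=
  {v | ∃ w : Fin 3 → F, w ≠ 0 ∧ v = algVec F w}

/-- Vectors of the standard conic with parameters in `S`. -/
def conicVecs {K : Type} [Field K] (S : Set K) : Set (Fin 3 → K) :=
  {v | ∃ θ ∈ S, v = ![1, θ, θ ^ 2]} ∪ {![0, 0, 1]}

/-- `b` is a Baer subline of the line `ℓ` of `PG(2,q²)`. -/
def IsBaerSublineOf (F : Type) {K : Type} [Field F] [Field K] [Algebra F K]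
    (b ℓ : Set (PP K 3)) : Prop :=
  ∃ M : Matrix (Fin 3) (Fin 3) K, IsUnit M.det ∧
    ℓ = mimg M (linfVecs K) ∧ b = mimg M (sublineVecs F K)

/-- `B` is a Baer subplane of `PG(2,q²)`. -/
def IsBaerSubplane (F : Type) {K : Type} [Field F] [Field K] [Algebra F K]
    (B : Set (PP K 3)) : Prop :=
  ∃ M : Matrix (Fin 3) (Fin 3) K, IsUnit M.det ∧ B = mimg M (subplaneVecs F K)

/-- `C` is the image under `PGL(3,K)` of the standard conic with parameters in `S`. -/
def IsConicOver {K : Type} [Field K] (S : Set K) (C : Set (PP K 3)) : Prop :=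
  ∃ M : Matrix (Fin 3) (Fin 3) K, IsUnit M.det ∧ C = mimg M (conicVecs S)

/-- An `F_q`-conic of `PG(2,q²)`: a nondegenerate conic of a Baer subplane. -/
def IsFqConic (F : Type) {K : Type} [Field F] [Field K] [Algebra F K]
    (C : Set (PP K 3)) : Prop :=
  IsConicOver (Set.range (algebraMap F K)) C

/-- An `F_{q²}`-conic of `PG(2,q²)`: a nondegenerate conic. -/
def IsFq2Conic {K : Type} [Field K] (C : Set (PP K 3)) : Prop :=
  IsConicOver (Set.univ : Set K) C

/-- `𝒦` is an `ℓ∞`-Baer pencil with vertex `P`. -/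
def IsLinfBaerPencil (F : Type) {K : Type} [Field F] [Field K] [Algebra F K]
    (𝒦 : Set (PP K 3)) (P : PP K 3) : Prop :=
  P ∈ linf K ∧ ∃ ℓ b : Set (PP K 3), IsBaerSublineOf F b ℓ ∧ P ∉ ℓ ∧
    (∃! X, X ∈ b ∩ linf K) ∧ 𝒦 = ⋃ X ∈ b, lineTh P X

/-- `m` is a line of the Baer subplane `B`, with extension (full line) `ℓ`. -/
def IsLineOfExt {K : Type} [Field K] (q : ℕ) (B m ℓ : Set (PP K 3)) : Prop :=
  IsFlat 1 ℓ ∧ m = B ∩ ℓ ∧ m.ncard = q + 1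

/-- `m` is a line of the Baer subplane `B`. -/
def IsLineOf {K : Type} [Field K] (q : ℕ) (B m : Set (PP K 3)) : Prop :=
  ∃ ℓ, IsLineOfExt q B m ℓ

/-- `P` and `Q` are conjugate with respect to the Baer subline `b` of `ℓ∞`. -/
def ConjWrtSubline (F : Type) {K : Type} [Field F] [Field K] [Algebra F K]
    (q : ℕ) (b : Set (PP K 3)) (P Q : PP K 3) : Prop :=
  ∃ (M : Matrix (Fin 3) (Fin 3) K) (hM : IsUnit M.det),
    mimg M (linfVecs K) = linf K ∧ b = mimg M (sublineVecs F K) ∧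
    ∃ P₀ : PP K 3, P = pmap M hM P₀ ∧ Q = pmap M hM (frobPt q P₀)

/-- A representative vector for the point `(δ,1,0)` (resp. `(1,0,0)`) of `ℓ∞`. -/
def ptInfVec {K : Type} [Field K] : Option K → Fin 3 → K
  | some δ => ![δ, 1, 0]
  | none => ![1, 0, 0]

lemma ptInfVec_ne {K : Type} [Field K] (t : Option K) : ptInfVec t ≠ 0 := by
  cases t with
  | none => intro h; have h0 := congrFun h 0; simp [ptInfVec] at h0
  | some δ => intro h; have h0 := congrFun h 1; simp [ptInfVec] at h0

/-- The point of `ℓ∞` with parameter `δ ∈ K ∪ {∞}`. -/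
def ptInf {K : Type} [Field K] (t : Option K) : PP K 3 :=
  Projectivization.mk K (ptInfVec t) (ptInfVec_ne t)

/-- The hyperplane at infinity `z = 0` of `PG(4, F)`. -/
def sinf (F : Type) [Field F] : Set (PP F 5) := {p | p.rep 4 = 0}

/-- Affine coordinates of the Bruck-Bose image of an affine point of `PG(2,q²)`. -/
def bbVec {F K : Type} [Field F] [Field K] (c0 c1 : K → F) (p : PP K 3) : Fin 5 → F :=
  ![c0 (p.rep 0 / p.rep 2), c1 (p.rep 0 / p.rep 2),
    c0 (p.rep 1 / p.rep 2), c1 (p.rep 1 / p.rep 2), 1]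

/-- The Bruck-Bose map (meaningful on affine points of `PG(2,q²)`). -/
def bb {F K : Type} [Field F] [Field K] (c0 c1 : K → F) (p : PP K 3) : PP F 5 :=
  Projectivization.mk F (bbVec c0 c1 p) (by
    intro h
    have h4 := congrFun h 4
    simp [bbVec] at h4)

/-- First spanning vector of the spread line with parameter `δ ∈ K ∪ {∞}`. -/
def spreadV1 {F K : Type} [Field F] [Field K] (c0 c1 : K → F) : Option K → Fin 5 → F
  | some δ => ![c0 δ, c1 δ, 1, 0, 0]
  | none => ![1, 0, 0, 0, 0]

/-- Second spanning vector of the spread line with parameter `δ ∈ K ∪ {∞}`. -/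
def spreadV2 {F K : Type} [Field F] [Field K] (c0 c1 : K → F) (t0 t1 : F) :
    Option K → Fin 5 → F
  | some δ => ![t0 * c1 δ, c0 δ + t1 * c1 δ, 0, 1, 0]
  | none => ![0, 1, 0, 0, 0]

/-- The line of the regular spread `S` with parameter `δ ∈ K ∪ {∞}`. -/
def spreadLine {F K : Type} [Field F] [Field K] (c0 c1 : K → F) (t0 t1 : F)
    (t : Option K) : Set (PP F 5) :=
  ptsOf (Submodule.span F {spreadV1 c0 c1 t, spreadV2 c0 c1 t0 t1 t})

/-- The extension `[T]⋆` of a spread line to `PG(4,q²)`. -/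
def extSpreadLine (F : Type) {K : Type} [Field F] [Field K] [Algebra F K]
    (c0 c1 : K → F) (t0 t1 : F) (t : Option K) : Set (PP K 5) :=
  ptsOf (Submodule.span K
    {algVec F (spreadV1 c0 c1 t), algVec F (spreadV2 c0 c1 t0 t1 t)})

/-- The `K`-extension of an `F`-subspace. -/
def extSub (F : Type) {K : Type} [Field F] [Field K] [Algebra F K] {n : ℕ}
    (W : Submodule F (Fin n → F)) : Submodule K (Fin n → K) :=
  Submodule.span K (algVec F '' (W : Set (Fin n → F)))

def A0v {K : Type} [Field K] (τ : K) (q : ℕ) : Fin 5 → K := ![τ ^ q, -1, 0, 0, 0]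
def A1v {K : Type} [Field K] (τ : K) (q : ℕ) : Fin 5 → K := ![0, 0, τ ^ q, -1, 0]
def B0v {K : Type} [Field K] (τ : K) : Fin 5 → K := ![τ, -1, 0, 0, 0]
def B1v {K : Type} [Field K] (τ : K) : Fin 5 → K := ![0, 0, τ, -1, 0]

/-- The transversal line `g` of the regular spread, in `PG(4,q²)`. -/
def gline {K : Type} [Field K] (τ : K) (q : ℕ) : Set (PP K 5) :=
  ptsOf (Submodule.span K {A0v τ q, A1v τ q})

/-- The conjugate transversal line `g^q` of the regular spread, in `PG(4,q²)`. -/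
def gqline {K : Type} [Field K] (τ : K) : Set (PP K 5) :=
  ptsOf (Submodule.span K {B0v τ, B1v τ})

/-- Representative vector of the point `T = δA₀ + A₁` of `g`. -/
def gptVec {K : Type} [Field K] (τ : K) (q : ℕ) : Option K → Fin 5 → K
  | some δ => δ • A0v τ q + A1v τ q
  | none => A0v τ q

/-- Representative vector of the conjugate point `T^q = δ^q A₀^q + A₁^q` of `g^q`. -/
def gqptVec {K : Type} [Field K] (τ : K) (q : ℕ) : Option K → Fin 5 → K
  | some δ => δ ^ q • B0v τ + B1v τ
  | none => B0v τ

lemma gptVec_ne {K : Type} [Field K] (τ : K) (q : ℕ) (t : Option K) :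
    gptVec τ q t ≠ 0 := by
  cases t with
  | none =>
      intro h
      have := congrFun h 1
      simp [gptVec, A0v] at this
  | some δ =>
      intro h
      have := congrFun h 3
      simp [gptVec, A0v, A1v] at this

lemma gqptVec_ne {K : Type} [Field K] (τ : K) (q : ℕ) (t : Option K) :
    gqptVec τ q t ≠ 0 := by
  cases t with
  | none =>
      intro h
      have := congrFun h 1
      simp [gqptVec, B0v] at this
  | some δ =>
      intro h
      have := congrFun h 3
      simp [gqptVec, B0v, B1v] at this

/-- The point of `g` corresponding to the point of `ℓ∞` with parameter `δ ∈ K ∪ {∞}`. -/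
def gpt {K : Type} [Field K] (τ : K) (q : ℕ) (t : Option K) : PP K 5 :=
  Projectivization.mk K (gptVec τ q t) (gptVec_ne τ q t)

/-- The point of `g^q` conjugate to `gpt τ q t`. -/
def gqpt {K : Type} [Field K] (τ : K) (q : ℕ) (t : Option K) : PP K 5 :=
  Projectivization.mk K (gqptVec τ q t) (gqptVec_ne τ q t)

/-- Evaluation of the quadratic form with matrix `M` at `v`. -/
def qeval {K : Type} [Field K] {n : ℕ} (M : Matrix (Fin n) (Fin n) K) (v : Fin n → K) : K :=
  v ⬝ᵥ M.mulVec v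

/-- Vectors of the standard twisted cubic (inside the hyperplane `x₄ = 0`)
with parameters in `S`. -/
def tcVecs {K : Type} [Field K] (S : Set K) : Set (Fin 5 → K) :=
  {v | ∃ θ ∈ S, v = ![1, θ, θ ^ 2, θ ^ 3, 0]} ∪ {![0, 0, 0, 1, 0]}

/-- Vectors of the standard 4-dimensional normal rational curve with parameters in `S`. -/
def nrcVecs {K : Type} [Field K] (S : Set K) : Set (Fin 5 → K) :=
  {v | ∃ θ ∈ S, v = ![1, θ, θ ^ 2, θ ^ 3, θ ^ 4]} ∪ {![0, 0, 0, 0, 1]}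

/-- `R` is a regulus of `Σ∞` in `PG(4,q)`. -/
def IsRegulus {F : Type} [Field F] (q : ℕ) (R : Set (Set (PP F 5))) : Prop :=
  R.ncard = q + 1 ∧
  (∀ ℓ ∈ R, IsFlat 1 ℓ ∧ ℓ ⊆ sinf F) ∧
  (∀ ℓ ∈ R, ∀ ℓ' ∈ R, ℓ ≠ ℓ' → ℓ ∩ ℓ' = ∅) ∧
  (∀ mℓ : Set (PP F 5), IsFlat 1 mℓ → mℓ ⊆ sinf F →
    (∃ ℓ₁ ∈ R, ∃ ℓ₂ ∈ R, ∃ ℓ₃ ∈ R, ℓ₁ ≠ ℓ₂ ∧ ℓ₁ ≠ ℓ₃ ∧ ℓ₂ ≠ ℓ₃ ∧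
      (mℓ ∩ ℓ₁).Nonempty ∧ (mℓ ∩ ℓ₂).Nonempty ∧ (mℓ ∩ ℓ₃).Nonempty) →
    ∀ ℓ ∈ R, (mℓ ∩ ℓ).Nonempty)


section helpers

lemma mk_mem_ptsOf {v : Fin n → K} (hv : v ≠ 0) (W : Submodule K (Fin n → K)) :
    Projectivization.mk K v hv ∈ ptsOf W ↔ v ∈ W := by
  obtain ⟨a, ha⟩ := Projectivization.exists_smul_eq_mk_rep K v hv
  show (Projectivization.mk K v hv).rep ∈ W ↔ _
  rw [← ha]
  exact Submodule.smul_mem_iff_of_isUnit W a.isUnit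

lemma mk_rep_zero_iff {v : Fin n → K} (hv : v ≠ 0) (i : Fin n) :
    (Projectivization.mk K v hv).rep i = 0 ↔ v i = 0 := by
  obtain ⟨a, ha⟩ := Projectivization.exists_smul_eq_mk_rep K v hv
  rw [← ha]
  simp [Units.smul_def]

lemma mk_rep_div {v : Fin n → K} (hv : v ≠ 0) (i j : Fin n) :
    (Projectivization.mk K v hv).rep i / (Projectivization.mk K v hv).rep j = v i / v j := by
  obtain ⟨a, ha⟩ := Projectivization.exists_smul_eq_mk_rep K v hv
  rw [← ha]
  simp only [Units.smul_def, Pi.smul_apply, smul_eq_mul]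
  exact mul_div_mul_left _ _ a.ne_zero

lemma eq_of_rep_smul {p p' : PP K n} (a : K) (h : p.rep = a • p'.rep) : p = p' := by
  have ha : a ≠ 0 := by
    rintro rfl
    exact p.rep_nonzero (by simpa using h)
  rw [← p.mk_rep, ← p'.mk_rep, Projectivization.mk_eq_mk_iff']
  exact ⟨a, h.symm⟩

lemma mulVec_sub (M : Matrix (Fin 3) (Fin 3) K) (a b c : K) :
    M.mulVec ![a, b, c] = a • M.col 0 + b • M.col 1 + c • M.col 2 := by
  ext i
  simp [Matrix.mulVec, dotProduct, Fin.sum_univ_three, Matrix.col]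
  ring

lemma sub_ne_zero' {F : Type} [Field F] [Algebra F K] {v : Fin 3 → K}
    (hv : v ∈ sublineVecs F K) : v ≠ 0 := by
  rintro rfl
  rcases hv with ⟨θ, h⟩ | h
  · simpa using congrFun h 1
  · simpa using congrFun h 0

lemma mulVec_ne {M : Matrix (Fin n) (Fin n) K} (hM : IsUnit M.det) {v : Fin n → K}
    (hv : v ≠ 0) : M.mulVec v ≠ 0 := by
  intro h
  exact hv (mulVec_inj M hM (by simpa using h))

lemma pencil_mem {F : Type} [Field F] [Algebra F K] (M : Matrix (Fin 3) (Fin 3) K)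
    (hM : IsUnit M.det) (P p : PP K 3) :
    (p ∈ ⋃ X ∈ mimg M (sublineVecs F K), lineTh P X) ↔
      ((∃ θ : F, ∃ r s : K, p.rep = r • P.rep + s • (algebraMap F K θ • M.col 0 + M.col 1)) ∨
      ∃ r s : K, p.rep = r • P.rep + s • M.col 0) := by
  have key : (p ∈ ⋃ X ∈ mimg M (sublineVecs F K), lineTh P X) ↔
      ∃ v ∈ sublineVecs F K, ∃ r s : K, p.rep = r • P.rep + s • M.mulVec v := by
    simp only [Set.mem_iUnion]
    constructor
    · rintro ⟨X, ⟨v, hv, h0, rfl⟩, hX⟩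
      obtain ⟨a, ha⟩ := Projectivization.exists_smul_eq_mk_rep K _ h0
      obtain ⟨r, s, h⟩ := Submodule.mem_span_pair.1 hX
      refine ⟨v, hv, r, s * a, ?_⟩
      rw [← h, ← ha, mul_smul]
      rfl
    · rintro ⟨v, hv, r, s, h⟩
      have h0 := mulVec_ne hM (sub_ne_zero' hv)
      obtain ⟨a, ha⟩ := Projectivization.exists_smul_eq_mk_rep K _ h0
      refine ⟨_, ⟨v, hv, h0, rfl⟩, Submodule.mem_span_pair.2 ⟨r, s * (a : K)⁻¹, ?_⟩⟩
      rw [h, ← ha, Units.smul_def, smul_smul]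
      simp
  rw [key]
  constructor
  · rintro ⟨v, ⟨θ, rfl⟩ | hv, r, s, h⟩
    · left
      refine ⟨θ, r, s, ?_⟩
      rw [h, mulVec_sub]; simp
    · right
      rw [Set.mem_singleton_iff] at hv
      subst hv
      refine ⟨r, s, ?_⟩
      rw [h, mulVec_sub]; simp
  · rintro (⟨θ, r, s, h⟩ | ⟨r, s, h⟩)
    · refine ⟨_, Or.inl ⟨θ, rfl⟩, r, s, ?_⟩
      rw [h, mulVec_sub]; simp
    · refine ⟨_, Or.inr rfl, r, s, ?_⟩
      rw [h, mulVec_sub]; simp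

lemma decomp (M : Matrix (Fin 3) (Fin 3) K) (hM : IsUnit M.det) (P : PP K 3)
    (hP : P ∉ mimg M (linfVecs K)) (v : Fin 3 → K) :
    ∃ r a b : K, v = r • P.rep + a • M.col 0 + b • M.col 1 := by
  have hs : ∀ u : Fin 3 → K, ∃ a b c : K, u = a • M.col 0 + b • M.col 1 + c • M.col 2 := by
    intro u
    refine ⟨M⁻¹.mulVec u 0, M⁻¹.mulVec u 1, M⁻¹.mulVec u 2, ?_⟩
    rw [← mulVec_sub]
    have : ![M⁻¹.mulVec u 0, M⁻¹.mulVec u 1, M⁻¹.mulVec u 2] = M⁻¹.mulVec u := by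
      ext i; fin_cases i <;> rfl
    rw [this, Matrix.mulVec_mulVec, Matrix.mul_nonsing_inv M hM, Matrix.one_mulVec]
  obtain ⟨a', b', c', hP'⟩ := hs P.rep
  obtain ⟨a, b, c, hv⟩ := hs v
  have hc' : c' ≠ 0 := by
    rintro rfl
    apply hP
    have e : P.rep = M.mulVec ![a', b', 0] := by rw [mulVec_sub, ← hP']
    refine ⟨![a', b', 0], ⟨?_, rfl⟩, ?_⟩
    · intro h
      apply P.rep_nonzero
      rw [e, h]; simp
    · refine ⟨e ▸ P.rep_nonzero, ?_⟩
      refine P.mk_rep.symm.trans ?_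
      rw [Projectivization.mk_eq_mk_iff']
      exact ⟨1, by rw [one_smul, e]⟩
  refine ⟨c / c', a - c / c' * a', b - c / c' * b', ?_⟩
  rw [hP', hv]
  ext i
  simp only [Pi.add_apply, Pi.smul_apply, smul_eq_mul]
  field_simp
  ring

/-- the affine points of the pencil, first case -/
lemma case_one {F : Type} [Field F] [Algebra F K] (M : Matrix (Fin 3) (Fin 3) K)
    (hM : IsUnit M.det) (P : PP K 3) (hP2 : P.rep 2 = 0)
    (hP : P ∉ mimg M (linfVecs K)) (L : (Fin 3 → K) →ₗ[K] K)
    (h0 : M.col 0 2 = 0) (h1 : M.col 1 2 ≠ 0)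
    (LP : L P.rep = 0) (L0 : L (M.col 0) = M.col 1 2) (L1 : L (M.col 1) = 0)
    (p : PP K 3) (hp : p.rep 2 ≠ 0) :
    (p ∈ ⋃ X ∈ mimg M (sublineVecs F K), lineTh P X) ↔
      ∃ θ : F, L p.rep / p.rep 2 = algebraMap F K θ := by
  rw [pencil_mem M hM]
  constructor
  · rintro (⟨θ, r, s, h⟩ | ⟨r, s, h⟩)
    · refine ⟨θ, ?_⟩
      rw [div_eq_iff hp, h]
      simp only [map_add, map_smul, LP, L0, L1, smul_eq_mul, Pi.add_apply, Pi.smul_apply, hP2, h0]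
      ring
    · exact absurd (by
        rw [h]; simp only [Pi.add_apply, Pi.smul_apply, hP2, h0, smul_zero, add_zero]) hp
  · rintro ⟨θ, h⟩
    obtain ⟨r, a, b, hd⟩ := decomp M hM P hP p.rep
    left
    refine ⟨θ, r, b, ?_⟩
    rw [div_eq_iff hp, hd] at h
    simp only [map_add, map_smul, LP, L0, L1, smul_eq_mul, Pi.add_apply, Pi.smul_apply,
      hP2, h0] at h
    have : a = b * algebraMap F K θ := by
      apply mul_right_cancel₀ h1
      linear_combination h
    rw [hd, this, smul_add, smul_smul, add_assoc]

lemma case_two {F : Type} [Field F] [Algebra F K] (M : Matrix (Fin 3) (Fin 3) K)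
    (hM : IsUnit M.det) (P : PP K 3) (hP2 : P.rep 2 = 0)
    (hP : P ∉ mimg M (linfVecs K)) (L : (Fin 3 → K) →ₗ[K] K) (θ₀ : F)
    (h0 : M.col 0 2 ≠ 0) (h1 : M.col 1 2 = - algebraMap F K θ₀ * M.col 0 2)
    (LP : L P.rep = 0) (L0 : L (M.col 0) = 0) (L1 : L (M.col 1) = M.col 0 2)
    (p : PP K 3) (hp : p.rep 2 ≠ 0) :
    (p ∈ ⋃ X ∈ mimg M (sublineVecs F K), lineTh P X) ↔
      ∃ θ : F, L p.rep / p.rep 2 = algebraMap F K θ := by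
  rw [pencil_mem M hM]
  constructor
  · rintro (⟨θ, r, s, h⟩ | ⟨r, s, h⟩)
    · refine ⟨(θ - θ₀)⁻¹, ?_⟩
      have e : p.rep 2 = s * (algebraMap F K θ - algebraMap F K θ₀) * M.col 0 2 := by
        rw [h]; simp only [Pi.add_apply, Pi.smul_apply, smul_eq_mul, hP2, h1]; ring
      have hne : algebraMap F K θ - algebraMap F K θ₀ ≠ 0 := by
        intro h'; rw [h'] at e; simp at e; exact hp e
      rw [div_eq_iff hp, e, h]
      simp only [map_add, map_smul, LP, L0, L1, smul_eq_mul, map_inv₀, map_sub]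
      field_simp
      ring
    · refine ⟨0, ?_⟩
      rw [h]
      simp [LP, L0]
  · rintro ⟨θ, h⟩
    obtain ⟨r, a, b, hd⟩ := decomp M hM P hP p.rep
    have hd2 : p.rep 2 = (a - b * algebraMap F K θ₀) * M.col 0 2 := by
      rw [hd]; simp only [Pi.add_apply, Pi.smul_apply, smul_eq_mul, hP2, h1]; ring
    rw [div_eq_iff hp, hd2, hd] at h
    simp only [map_add, map_smul, LP, L0, L1, smul_eq_mul] at h
    have h' : b = algebraMap F K θ * (a - b * algebraMap F K θ₀) := by
      apply mul_right_cancel₀ h0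
      linear_combination h
    by_cases hθ : θ = 0
    · right
      refine ⟨r, a, ?_⟩
      rw [hd]
      simp [hθ] at h'
      simp [h']
    · left
      have hθ' : algebraMap F K θ ≠ 0 := by simpa using hθ
      refine ⟨θ⁻¹ + θ₀, r, b, ?_⟩
      rw [hd, smul_add, smul_smul, ← add_assoc]
      congr 3
      simp only [map_add, map_inv₀]
      field_simp
      linear_combination -h'

end helpers

section bbsec

variable {F : Type} [Field F] [Algebra F K]

lemma c_unique {τ : K} (hτF : τ ∉ Set.range (algebraMap F K)) {a b a' b' : F}
    (h : algebraMap F K a + algebraMap F K b * τ = algebraMap F K a' + algebraMap F K b' * τ) :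
    a = a' ∧ b = b' := by
  have hb : b = b' := by
    by_contra hne
    have hne' : algebraMap F K b - algebraMap F K b' ≠ 0 := by
      rw [sub_ne_zero]; exact fun h => hne ((algebraMap F K).injective h)
    apply hτF
    refine ⟨(a' - a) / (b - b'), ?_⟩
    rw [map_div₀, map_sub, map_sub, div_eq_iff hne']
    linear_combination -h
  subst hb
  exact ⟨(algebraMap F K).injective (by simpa using h), rfl⟩

lemma bb_bij {τ : K} (hτF : τ ∉ Set.range (algebraMap F K)) {c0 c1 : K → F}
    (hc : ∀ x : K, x = algebraMap F K (c0 x) + algebraMap F K (c1 x) * τ)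
    (A : Set (PP K 3)) (B : Set (PP F 5))
    (h : ∀ p : PP K 3, p.rep 2 ≠ 0 → (p ∈ A ↔ bb c0 c1 p ∈ B)) :
    Set.BijOn (bb c0 c1) (A \ linf K) (B \ sinf F) := by
  refine ⟨?_, ?_, ?_⟩
  · rintro p ⟨hA, hl⟩
    refine ⟨(h p hl).1 hA, ?_⟩
    intro h4
    have h5 := (mk_rep_zero_iff _ 4).1 h4
    simp [bbVec] at h5
  · rintro p ⟨_, hl⟩ p' ⟨_, hl'⟩ e
    change ¬ p.rep 2 = 0 at hl
    change ¬ p'.rep 2 = 0 at hl'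
    obtain ⟨a, ha⟩ := (Projectivization.mk_eq_mk_iff' F _ _ _ _).1 e
    have ha1 : a = 1 := by simpa [bbVec] using congrFun ha 4
    rw [ha1, one_smul] at ha
    have e0 : c0 (p'.rep 0 / p'.rep 2) = c0 (p.rep 0 / p.rep 2) := by
      simpa [bbVec] using congrFun ha 0
    have e1 : c1 (p'.rep 0 / p'.rep 2) = c1 (p.rep 0 / p.rep 2) := by
      simpa [bbVec] using congrFun ha 1
    have e2 : c0 (p'.rep 1 / p'.rep 2) = c0 (p.rep 1 / p.rep 2) := by
      simpa [bbVec] using congrFun ha 2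
    have e3 : c1 (p'.rep 1 / p'.rep 2) = c1 (p.rep 1 / p.rep 2) := by
      simpa [bbVec] using congrFun ha 3
    have f0 : p.rep 0 / p.rep 2 = p'.rep 0 / p'.rep 2 := by
      rw [hc (p.rep 0 / p.rep 2), hc (p'.rep 0 / p'.rep 2), e0, e1]
    have f1 : p.rep 1 / p.rep 2 = p'.rep 1 / p'.rep 2 := by
      rw [hc (p.rep 1 / p.rep 2), hc (p'.rep 1 / p'.rep 2), e2, e3]
    apply eq_of_rep_smul (p.rep 2 / p'.rep 2)
    rw [div_eq_iff hl] at f0 f1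
    ext i
    fin_cases i
    · simp only [Pi.smul_apply, smul_eq_mul]
      show p.rep 0 = _ * p'.rep 0
      rw [f0]; ring
    · show p.rep 1 = _ * p'.rep 1
      rw [f1]; ring
    · show p.rep 2 = _ * p'.rep 2
      field_simp
  · rintro w ⟨hB, hw⟩
    change ¬ w.rep 4 = 0 at hw
    set x : K := algebraMap F K (w.rep 0 / w.rep 4) + algebraMap F K (w.rep 1 / w.rep 4) * τ with hx
    set y : K := algebraMap F K (w.rep 2 / w.rep 4) + algebraMap F K (w.rep 3 / w.rep 4) * τ with hy
    have hv : (![x, y, 1] : Fin 3 → K) ≠ 0 := by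
      intro h; simpa using congrFun h 2
    obtain ⟨x0, x1⟩ := c_unique hτF ((hc x).symm.trans hx)
    obtain ⟨y0, y1⟩ := c_unique hτF ((hc y).symm.trans hy)
    set p := Projectivization.mk K _ hv with hpdef
    have hp2 : p.rep 2 ≠ 0 := by rw [hpdef, Ne, mk_rep_zero_iff]; simp
    have hbb : bb c0 c1 p = w := by
      rw [← w.mk_rep]
      unfold bb
      rw [Projectivization.mk_eq_mk_iff']
      refine ⟨(w.rep 4)⁻¹, ?_⟩
      unfold bbVec
      have d0 : p.rep 0 / p.rep 2 = x := by rw [hpdef, mk_rep_div]; simp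
      have d1 : p.rep 1 / p.rep 2 = y := by rw [hpdef, mk_rep_div]; simp
      rw [d0, d1, x0, x1, y0, y1]
      ext i
      fin_cases i <;> simp [div_eq_inv_mul, hw]
    exact ⟨p, ⟨(h p hp2).2 (hbb ▸ hB), hp2⟩, hbb⟩

end bbsec

section hyp

variable {F : Type} [Field F] [Algebra F K]

/-- affine form attached to `α β γ` -/
def Phi (τ α β γ : K) (w : Fin 5 → F) : K :=
  α * (algebraMap F K (w 0) + algebraMap F K (w 1) * τ) +
  β * (algebraMap F K (w 2) + algebraMap F K (w 3) * τ) + γ * algebraMap F K (w 4)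

/-- the linear form -/
def Lf (α β γ : K) : (Fin 3 → K) →ₗ[K] K where
  toFun v := α * v 0 + β * v 1 + γ * v 2
  map_add' u v := by simp; ring
  map_smul' a v := by simp; ring

lemma Lf_apply (α β γ : K) (v : Fin 3 → K) : Lf α β γ v = α * v 0 + β * v 1 + γ * v 2 := rfl

lemma c1_zero_iff {τ : K} (hτF : τ ∉ Set.range (algebraMap F K)) {c0 c1 : K → F}
    (hc : ∀ x : K, x = algebraMap F K (c0 x) + algebraMap F K (c1 x) * τ) (x : K) :
    c1 x = 0 ↔ ∃ θ : F, x = algebraMap F K θ := by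
  constructor
  · intro h
    refine ⟨c0 x, ?_⟩
    conv_lhs => rw [hc x, h]
    simp
  · rintro ⟨θ, h⟩
    refine (c_unique hτF (a := c0 x) (a' := θ) (b' := 0) ?_).2
    rw [← hc]; simp [h]

/-- BijOn from the description of the pencil and of the subspace -/
lemma bij_of {τ : K} (hτF : τ ∉ Set.range (algebraMap F K)) {c0 c1 : K → F}
    (hc : ∀ x : K, x = algebraMap F K (c0 x) + algebraMap F K (c1 x) * τ)
    (α β γ : K) (W : Submodule F (Fin 5 → F)) (hW : ∀ w, w ∈ W ↔ c1 (Phi τ α β γ w) = 0)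
    (A : Set (PP K 3))
    (hA : ∀ p : PP K 3, p.rep 2 ≠ 0 →
      (p ∈ A ↔ ∃ θ : F, Lf α β γ p.rep / p.rep 2 = algebraMap F K θ)) :
    Set.BijOn (bb c0 c1) (A \ linf K) (ptsOf W \ sinf F) := by
  apply bb_bij hτF hc
  intro p hp
  rw [hA p hp, ← c1_zero_iff hτF hc]
  unfold bb
  rw [mk_mem_ptsOf, hW]
  have : Phi τ α β γ (bbVec c0 c1 p) = Lf α β γ p.rep / p.rep 2 := by
    simp only [Phi, bbVec, Lf_apply]
    simp only [Matrix.cons_val]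
    rw [← hc, ← hc]
    simp
    field_simp
  rw [this]

/-- any functional is of the form `c1 ∘ Phi` -/
lemma exists_Phi {τ : K} {t0 t1 : F} (hτ : τ ^ 2 = algebraMap F K t1 * τ + algebraMap F K t0)
    (hτF : τ ∉ Set.range (algebraMap F K)) {c0 c1 : K → F}
    (hc : ∀ x : K, x = algebraMap F K (c0 x) + algebraMap F K (c1 x) * τ)
    (f : (Fin 5 → F) →ₗ[F] F) : ∃ α β γ : K, ∀ w, f w = c1 (Phi τ α β γ w) := by
  let a : Fin 5 → F := fun i => f (Pi.single i 1)
  have hf : ∀ w, f w = w 0 * a 0 + w 1 * a 1 + w 2 * a 2 + w 3 * a 3 + w 4 * a 4 := by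
    intro w
    rw [LinearMap.pi_apply_eq_sum_univ f w]
    simp only [Fin.sum_univ_five, smul_eq_mul, a]
    have : ∀ i : Fin 5, (fun j => if i = j then (1:F) else 0) = Pi.single i 1 := by
      intro i; ext j; simp [Pi.single_apply, eq_comm]
    simp only [this]
  refine ⟨algebraMap F K (a 1 - a 0 * t1) + algebraMap F K (a 0) * τ,
    algebraMap F K (a 3 - a 2 * t1) + algebraMap F K (a 2) * τ, algebraMap F K (a 4) * τ, ?_⟩
  intro w
  rw [hf]
  refine ((c_unique hτF (b' := w 0 * a 0 + w 1 * a 1 + w 2 * a 2 + w 3 * a 3 + w 4 * a 4)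
    (a' := (a 1 - a 0 * t1) * w 0 + a 0 * w 1 * t0 + (a 3 - a 2 * t1) * w 2 + a 2 * w 3 * t0)
    ((hc _).symm.trans ?_)).2).symm
  simp only [Phi, map_add, map_mul, map_sub]
  linear_combination (algebraMap F K (a 0) * algebraMap F K (w 1) +
    algebraMap F K (a 2) * algebraMap F K (w 3)) * hτ

/-- `c1 ∘ Phi` as a linear map -/
lemma exists_f {τ : K}
    (hτF : τ ∉ Set.range (algebraMap F K)) {c0 c1 : K → F}
    (hc : ∀ x : K, x = algebraMap F K (c0 x) + algebraMap F K (c1 x) * τ) (α β γ : K) :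
    ∃ f : (Fin 5 → F) →ₗ[F] F, ∀ w, f w = c1 (Phi τ α β γ w) := by
  have hadd : ∀ x y, c1 (x + y) = c1 x + c1 y := fun x y => by
    refine (c_unique hτF (a' := c0 x + c0 y) ((hc (x + y)).symm.trans ?_)).2
    conv_lhs => rw [hc x, hc y]
    simp only [map_add]; ring
  have hsm : ∀ (a : F) x, c1 (algebraMap F K a * x) = a * c1 x := fun a x => by
    refine (c_unique hτF (a' := a * c0 x) ((hc (algebraMap F K a * x)).symm.trans ?_)).2
    conv_lhs => rw [hc x]
    simp only [map_mul]; ring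
  refine ⟨⟨⟨fun w => c1 (Phi τ α β γ w), ?_⟩, ?_⟩, fun w => rfl⟩
  · intro u v
    rw [← hadd]; congr 1
    simp only [Phi, Pi.add_apply, map_add]; ring
  · intro a v
    simp only [RingHom.id_apply, smul_eq_mul]
    rw [← hsm]; congr 1
    simp only [Phi, Pi.smul_apply, smul_eq_mul, map_mul]; ring

lemma c1_both {τ : K} (hτF : τ ∉ Set.range (algebraMap F K)) {c0 c1 : K → F}
    (hc : ∀ x : K, x = algebraMap F K (c0 x) + algebraMap F K (c1 x) * τ) (x : K) :
    (c1 x = 0 ∧ c1 (x * τ) = 0) ↔ x = 0 := by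
  have h0 : c1 0 = 0 := (c1_zero_iff hτF hc 0).2 ⟨0, by simp⟩
  constructor
  · rintro ⟨h1, h2⟩
    obtain ⟨θ, rfl⟩ := (c1_zero_iff hτF hc x).1 h1
    have := (c_unique hτF (a' := 0) (b' := θ) ((hc (algebraMap F K θ * τ)).symm.trans (by simp))).2
    rw [← this, h2]; simp
  · rintro rfl
    simp [h0]

lemma spread_iff {τ : K} {t0 t1 : F} (hτ : τ ^ 2 = algebraMap F K t1 * τ + algebraMap F K t0)
    (hτF : τ ∉ Set.range (algebraMap F K)) {c0 c1 : K → F}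
    (hc : ∀ x : K, x = algebraMap F K (c0 x) + algebraMap F K (c1 x) * τ)
    (α β γ : K) (W : Submodule F (Fin 5 → F)) (hW : ∀ w, w ∈ W ↔ c1 (Phi τ α β γ w) = 0)
    (t : Option K) :
    spreadLine c0 c1 t0 t1 t ⊆ ptsOf W ↔ Lf α β γ (ptInfVec t) = 0 := by
  have e1 : Phi τ α β γ (spreadV1 c0 c1 t) = Lf α β γ (ptInfVec t) := by
    cases t with
    | none => simp [Phi, spreadV1, Lf_apply, ptInfVec]
    | some δ =>
      simp only [Phi, spreadV1, Lf_apply, ptInfVec, Matrix.cons_val]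
      rw [← hc]; simp
  have e2 : Phi τ α β γ (spreadV2 c0 c1 t0 t1 t) = Lf α β γ (ptInfVec t) * τ := by
    cases t with
    | none => simp [Phi, spreadV2, Lf_apply, ptInfVec]
    | some δ =>
      simp only [Phi, spreadV2, Lf_apply, ptInfVec, Matrix.cons_val]
      conv_rhs => rw [hc δ]
      simp
      linear_combination -α * algebraMap F K (c1 δ) * hτ
  have n1 : spreadV1 c0 c1 t ≠ 0 := by
    cases t with
    | none => intro h; simpa [spreadV1] using congrFun h 0
    | some δ => intro h; simpa [spreadV1] using congrFun h 2
  have n2 : spreadV2 c0 c1 t0 t1 t ≠ 0 := by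
    cases t with
    | none => intro h; simpa [spreadV2] using congrFun h 1
    | some δ => intro h; simpa [spreadV2] using congrFun h 3
  rw [← c1_both hτF hc, ← e2, ← e1, ← hW, ← hW]
  constructor
  · intro h
    constructor
    · rw [← mk_mem_ptsOf n1]
      exact h ((mk_mem_ptsOf n1 _).2 (Submodule.subset_span (by simp)))
    · rw [← mk_mem_ptsOf n2]
      exact h ((mk_mem_ptsOf n2 _).2 (Submodule.subset_span (by simp)))
  · rintro ⟨h1, h2⟩ p hp
    have : Submodule.span F {spreadV1 c0 c1 t, spreadV2 c0 c1 t0 t1 t} ≤ W := by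
      rw [Submodule.span_le]
      rintro x (rfl | rfl)
      · exact h1
      · exact h2
    exact this hp

/-- hyperplane from `α β γ` -/
lemma exists_W {τ : K}
    (hτF : τ ∉ Set.range (algebraMap F K)) {c0 c1 : K → F}
    (hc : ∀ x : K, x = algebraMap F K (c0 x) + algebraMap F K (c1 x) * τ) (α β γ : K)
    (hab : α ≠ 0 ∨ β ≠ 0) :
    ∃ W : Submodule F (Fin 5 → F), Module.finrank F W = 4 ∧ ptsOf W ≠ sinf F ∧
      ∀ w, w ∈ W ↔ c1 (Phi τ α β γ w) = 0 := by
  obtain ⟨f, hf⟩ := exists_f hτF hc α β γ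
  have hex : ∃ w : Fin 5 → F, w 4 = 0 ∧ f w ≠ 0 := by
    by_contra! hcon
    have hz : ∀ w : Fin 5 → F, w 4 = 0 → c1 (Phi τ α β γ w) = 0 := fun w h => by
      rw [← hf]; exact hcon w h
    rcases hab with h | h
    · apply h
      rw [← c1_both hτF hc]
      constructor
      · simpa [Phi] using hz ![1, 0, 0, 0, 0] rfl
      · simpa [Phi] using hz ![0, 1, 0, 0, 0] rfl
    · apply h
      rw [← c1_both hτF hc]
      constructor
      · simpa [Phi] using hz ![0, 0, 1, 0, 0] rfl
      · simpa [Phi] using hz ![0, 0, 0, 1, 0] rfl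
  obtain ⟨w, hw4, hw⟩ := hex
  have hw0 : w ≠ 0 := by rintro rfl; simp at hw
  refine ⟨LinearMap.ker f, ?_, ?_, fun w => by rw [LinearMap.mem_ker, hf]⟩
  · have h1 := LinearMap.finrank_range_add_finrank_ker f
    have h2 : LinearMap.range f = ⊤ := by
      rw [LinearMap.range_eq_top]
      apply LinearMap.surjective
      rintro rfl; simp at hw
    rw [h2, finrank_top, Module.finrank_self, Module.finrank_fin_fun] at h1
    omega
  · intro h
    have hm : Projectivization.mk F w hw0 ∈ sinf F := (mk_rep_zero_iff hw0 4).2 hw4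
    rw [← h, mk_mem_ptsOf] at hm
    exact hw hm

/-- `α β γ` from hyperplane -/
lemma exists_abc {τ : K} {t0 t1 : F} (hτ : τ ^ 2 = algebraMap F K t1 * τ + algebraMap F K t0)
    (hτF : τ ∉ Set.range (algebraMap F K)) {c0 c1 : K → F}
    (hc : ∀ x : K, x = algebraMap F K (c0 x) + algebraMap F K (c1 x) * τ)
    (W : Submodule F (Fin 5 → F)) (hW4 : Module.finrank F W = 4) (hWne : ptsOf W ≠ sinf F) :
    ∃ α β γ : K, (α ≠ 0 ∨ β ≠ 0) ∧ ∀ w, w ∈ W ↔ c1 (Phi τ α β γ w) = 0 := by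
  have hlt : W < ⊤ := by
    rw [lt_top_iff_ne_top]
    rintro rfl
    rw [finrank_top, Module.finrank_fin_fun] at hW4
    omega
  obtain ⟨f, hf0, hle⟩ := Submodule.exists_le_ker_of_lt_top W hlt
  have hker : Module.finrank F (LinearMap.ker f) = 4 := by
    have h1 := LinearMap.finrank_range_add_finrank_ker f
    have h2 : LinearMap.range f = ⊤ := by
      rw [LinearMap.range_eq_top]
      exact LinearMap.surjective hf0
    rw [h2, finrank_top, Module.finrank_self, Module.finrank_fin_fun] at h1
    omega
  have hWk : W = LinearMap.ker f := Submodule.eq_of_le_of_finrank_eq hle (by rw [hW4, hker])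
  obtain ⟨α, β, γ, hf⟩ := exists_Phi hτ hτF hc f
  have hW : ∀ w, w ∈ W ↔ c1 (Phi τ α β γ w) = 0 := fun w => by rw [hWk, LinearMap.mem_ker, hf]
  refine ⟨α, β, γ, ?_, hW⟩
  by_contra! hcon
  obtain ⟨rfl, rfl⟩ := hcon
  apply hWne
  have hs : f (Pi.single 4 1) ≠ 0 := by
    intro h0
    apply hf0
    ext i
    fin_cases i <;> first | exact h0 | skip
    all_goals
      simp [hf, Phi]
      exact (c1_zero_iff hτF hc 0).2 ⟨0, by simp⟩
  ext p
  show p.rep ∈ W ↔ p.rep 4 = 0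
  have : f p.rep = p.rep 4 * f (Pi.single 4 1) := by
    rw [← smul_eq_mul, ← map_smul, hf, hf]
    simp [Phi]
  rw [hWk, LinearMap.mem_ker, this]
  simp [hs]

/-- pencil from `α β γ` -/
lemma exists_pencil (α β γ : K) (hab : α ≠ 0 ∨ β ≠ 0) (P : PP K 3) (hP2 : P.rep 2 = 0)
    (hLP : Lf α β γ P.rep = 0) :
    ∃ A : Set (PP K 3), IsLinfBaerPencil F A P ∧ ∀ p : PP K 3, p.rep 2 ≠ 0 →
      (p ∈ A ↔ ∃ θ : F, Lf α β γ p.rep / p.rep 2 = algebraMap F K θ) := by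
  obtain ⟨n0, n1, z0, z1, l0, l1⟩ : ∃ n0 n1 : Fin 3 → K, n0 2 = 0 ∧ n1 2 = 1 ∧
      Lf α β γ n0 = 1 ∧ Lf α β γ n1 = 0 := by
    rcases hab with h | h
    · refine ⟨![1 / α, 0, 0], ![-γ / α, 0, 1], rfl, rfl, ?_, ?_⟩
      · simp [Lf_apply, h]
      · simp [Lf_apply]; field_simp; ring
    · refine ⟨![0, 1 / β, 0], ![0, -γ / β, 1], rfl, rfl, ?_, ?_⟩
      · simp [Lf_apply, h]
      · simp [Lf_apply]; field_simp; ring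
  let M : Matrix (Fin 3) (Fin 3) K := Matrix.of fun i j => ![n0, n1, P.rep] j i
  have m0 : M.col 0 = n0 := rfl
  have m1 : M.col 1 = n1 := rfl
  have m2 : M.col 2 = P.rep := rfl
  have hM : IsUnit M.det := by
    rw [isUnit_iff_ne_zero]
    intro hd
    obtain ⟨v, hv, hMv⟩ := Matrix.exists_mulVec_eq_zero_iff.2 hd
    apply hv
    have ev : v = ![v 0, v 1, v 2] := by ext i; fin_cases i <;> rfl
    rw [ev, mulVec_sub, m0, m1, m2] at hMv
    have v1 : v 1 = 0 := by simpa [z0, z1, hP2] using congrFun hMv 2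
    have v0 : v 0 = 0 := by simpa [l0, l1, hLP] using congrArg (Lf α β γ) hMv
    rw [v0, v1] at hMv
    have v2 : v 2 = 0 := by
      have : v 2 • P.rep = 0 := by simpa using hMv
      rcases smul_eq_zero.1 this with h | h
      · exact h
      · exact absurd h P.rep_nonzero
    rw [ev, v0, v1, v2]; ext i; fin_cases i <;> rfl
  have hPl : P ∉ mimg M (linfVecs K) := by
    rintro ⟨v, ⟨hv, hv2⟩, h0, hPe⟩
    obtain ⟨a, ha⟩ := Projectivization.exists_smul_eq_mk_rep K _ h0
    rw [← hPe] at ha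
    have ev : v = ![v 0, v 1, 0] := by ext i; fin_cases i <;> first | rfl | exact hv2
    rw [ev, mulVec_sub, m0, m1, m2, Units.smul_def] at ha
    have v1 : v 1 = 0 := by simpa [z0, z1, hP2] using congrFun ha 2
    have v0 : v 0 = 0 := by simpa [l0, l1, hLP] using congrArg (Lf α β γ) ha
    apply hv
    rw [ev, v0, v1]; ext i; fin_cases i <;> rfl
  refine ⟨⋃ X ∈ mimg M (sublineVecs F K), lineTh P X,
    ⟨hP2, _, _, ⟨M, hM, rfl, rfl⟩, hPl, ?_, rfl⟩, ?_⟩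
  · have e0 : M.mulVec ![1, 0, 0] = n0 := by rw [mulVec_sub, m0]; simp
    have hn0 : M.mulVec ![1, 0, 0] ≠ 0 := by
      rw [e0]; rintro rfl; simp at l0
    refine ⟨Projectivization.mk K _ hn0, ⟨⟨_, Or.inr rfl, hn0, rfl⟩, ?_⟩, ?_⟩
    · refine (mk_rep_zero_iff _ 2).2 ?_
      rw [e0, z0]
    · rintro X ⟨⟨v, ⟨θ, rfl⟩ | hv, h0, rfl⟩, hX⟩
      · exfalso
        replace hX := (mk_rep_zero_iff _ 2).1 hX
        rw [mulVec_sub, m0, m1] at hX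
        simp [z0, z1] at hX
      · rw [Set.mem_singleton_iff] at hv
        subst hv
        rfl
  · intro p hp
    exact case_one M hM P hP2 hPl (Lf α β γ) (by rw [m0, z0]) (by rw [m1, z1]; simp) hLP
      (by rw [m0, m1, l0, z1]) (by rw [m1, l1]) p hp

/-- `α β γ` from pencil -/
lemma pencil_abc (A : Set (PP K 3)) (P : PP K 3) (h : IsLinfBaerPencil F A P) :
    ∃ α β γ : K, (α ≠ 0 ∨ β ≠ 0) ∧ ∀ p : PP K 3, p.rep 2 ≠ 0 →
      (p ∈ A ↔ ∃ θ : F, Lf α β γ p.rep / p.rep 2 = algebraMap F K θ) := by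
  obtain ⟨hP2, ℓ, b, ⟨M, hM, rfl, rfl⟩, hPl, ⟨X, ⟨⟨v, hv, h0, rfl⟩, hXl⟩, hXu⟩, rfl⟩ := h
  change P.rep 2 = 0 at hP2
  have hform : ∀ L : (Fin 3 → K) →ₗ[K] K, ∃ α β γ : K, L = Lf α β γ := by
    intro L
    refine ⟨L (Pi.single 0 1), L (Pi.single 1 1), L (Pi.single 2 1), ?_⟩
    ext i
    fin_cases i <;> simp [Lf_apply]
  -- the linear forms
  have hL : ∀ c d : K, ∃ L : (Fin 3 → K) →ₗ[K] K,
      L P.rep = 0 ∧ L (M.col 0) = c ∧ L (M.col 1) = d := by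
    intro c d
    let N : Fin 3 → (Fin 3 → K) := ![P.rep, M.col 0, M.col 1]
    have hsp : ⊤ ≤ Submodule.span K (Set.range N) := by
      intro v _
      obtain ⟨r, a, b, hd⟩ := decomp M hM P hPl v
      rw [hd]
      have hN : ∀ i, N i ∈ Submodule.span K (Set.range N) :=
        fun i => Submodule.subset_span ⟨i, rfl⟩
      exact add_mem (add_mem (Submodule.smul_mem _ _ (hN 0)) (Submodule.smul_mem _ _ (hN 1)))
        (Submodule.smul_mem _ _ (hN 2))
    let B := basisOfTopLeSpanOfCardEqFinrank N hsp (by simp)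
    have hB : ∀ i, B i = N i := fun i => by simp [B]
    refine ⟨B.constr K ![0, c, d], ?_, ?_, ?_⟩
    · have := B.constr_basis K ![0, c, d] 0
      rw [hB] at this; exact this
    · have := B.constr_basis K ![0, c, d] 1
      rw [hB] at this; exact this
    · have := B.constr_basis K ![0, c, d] 2
      rw [hB] at this; exact this
  replace hXl := (mk_rep_zero_iff _ 2).1 hXl
  by_cases hm0 : M.col 0 2 = 0
  · have hm1 : M.col 1 2 ≠ 0 := by
      intro hm1
      have hne : ∀ w ∈ sublineVecs F K, M.mulVec w ≠ 0 := fun w hw => mulVec_ne hM (sub_ne_zero' hw)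
      have hall : ∀ w (hw : w ∈ sublineVecs F K), (M.mulVec w) 2 = 0 →
          Projectivization.mk K (M.mulVec w) (hne w hw) = Projectivization.mk K _ h0 :=
        fun w hw hz => hXu _ ⟨⟨w, hw, hne w hw, rfl⟩, (mk_rep_zero_iff (hne w hw) 2).2 hz⟩
      have w1 : (![1, 0, 0] : Fin 3 → K) ∈ sublineVecs F K := Or.inr rfl
      have w2 : (![algebraMap F K 0, 1, 0] : Fin 3 → K) ∈ sublineVecs F K := Or.inl ⟨0, rfl⟩
      have e := (hall _ w1 (by rw [mulVec_sub]; simpa using hm0)).trans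
        (hall _ w2 (by rw [mulVec_sub]; simpa using hm1)).symm
      rw [Projectivization.mk_eq_mk_iff'] at e
      obtain ⟨a, ha⟩ := e
      rw [← Matrix.mulVec_smul] at ha
      have := congrFun (mulVec_inj M hM ha) 0
      simp at this
    obtain ⟨L, LP, L0, L1⟩ := hL (M.col 1 2) 0
    obtain ⟨α, β, γ, rfl⟩ := hform L
    refine ⟨α, β, γ, ?_, fun p hp => case_one M hM P hP2 hPl _ hm0 hm1 LP L0 L1 p hp⟩
    by_contra! hcon
    apply hm1
    rw [← L0, Lf_apply, hcon.1, hcon.2, hm0]; simp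
  · obtain ⟨θ, hθ⟩ : ∃ θ : F, v = ![algebraMap F K θ, 1, 0] := by
      rcases hv with hv | hv
      · exact hv
      · rw [Set.mem_singleton_iff] at hv
        subst hv
        rw [mulVec_sub] at hXl
        exact absurd (by simpa using hXl) hm0
    subst hθ
    rw [mulVec_sub] at hXl
    simp only [Pi.add_apply, Pi.smul_apply, smul_eq_mul, one_mul, zero_mul, add_zero] at hXl
    obtain ⟨L, LP, L0, L1⟩ := hL 0 (M.col 0 2)
    obtain ⟨α, β, γ, rfl⟩ := hform L
    refine ⟨α, β, γ, ?_, fun p hp => case_two M hM P hP2 hPl _ θ hm0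
      (by linear_combination hXl) LP L0 L1 p hp⟩
    by_contra! hcon
    apply hm0
    have : Lf α β γ (algebraMap F K θ • M.col 0 + M.col 1) = M.col 0 2 := by
      rw [map_add, map_smul, L0, L1]; simp
    rw [← this, Lf_apply, hcon.1, hcon.2]
    simp only [Pi.add_apply, Pi.smul_apply, smul_eq_mul, hXl]
    ring

end hyp

/-- A hyperplane `Π ≠ Σ∞` of `PG(4,q)` contains a unique spread line `[T]`, and
corresponds to an `ℓ∞`-Baer pencil with vertex `T̄`; conversely every `ℓ∞`-Baer pencil
correspondsds to a hyperplane in this way. -/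
theorem statement_1
    {F K : Type} [Field F] [Field K] [Fintype F] [Fintype K] [Algebra F K]
    (q : ℕ) (hq : Fintype.card F = q) (hK : Fintype.card K = q ^ 2)
    (τ : K) (t0 t1 : F)
    (hτ : τ ^ 2 = algebraMap F K t1 * τ + algebraMap F K t0)
    (hτF : τ ∉ Set.range (algebraMap F K))
    (c0 c1 : K → F)
    (hc : ∀ x : K, x = algebraMap F K (c0 x) + algebraMap F K (c1 x) * τ)
    (Wsub : Submodule F (Fin 5 → F)) (hW4 : Module.finrank F Wsub = 4)
    (hWne : ptsOf Wsub ≠ sinf F) :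
    ((∃! t : Option K, spreadLine c0 c1 t0 t1 t ⊆ ptsOf Wsub) ∧
      ∀ t : Option K, spreadLine c0 c1 t0 t1 t ⊆ ptsOf Wsub →
        ∃ 𝒦 : Set (PP K 3), IsLinfBaerPencil F 𝒦 (ptInf t) ∧
          Set.BijOn (bb c0 c1) (𝒦 \ linf K) (ptsOf Wsub \ sinf F)) ∧
    (∀ (𝒦 : Set (PP K 3)) (P : PP K 3), IsLinfBaerPencil F 𝒦 P →
      ∃ W' : Submodule F (Fin 5 → F), Module.finrank F W' = 4 ∧ ptsOf W' ≠ sinf F ∧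
        Set.BijOn (bb c0 c1) (𝒦 \ linf K) (ptsOf W' \ sinf F)) := by
  refine ⟨?_, ?_⟩
  · obtain ⟨α, β, γ, hab, hW⟩ := exists_abc hτ hτF hc Wsub hW4 hWne
    refine ⟨?_, ?_⟩
    · simp only [spread_iff hτ hτF hc α β γ Wsub hW]
      by_cases hα : α = 0
      · have hβ : β ≠ 0 := by
          rcases hab with h | h
          · exact absurd hα h
          · exact h
        refine ⟨none, by simp [Lf_apply, ptInfVec, hα], ?_⟩
        intro t ht
        cases t with
        | none => rfl
        | some δ => exact absurd (by simpa [Lf_apply, ptInfVec, hα] using ht) hβ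
      · refine ⟨some (-β / α), by simp [Lf_apply, ptInfVec]; field_simp; ring, ?_⟩
        intro t ht
        cases t with
        | none => exact absurd (by simpa [Lf_apply, ptInfVec] using ht) hα
        | some δ =>
          simp [Lf_apply, ptInfVec] at ht
          congr 1
          rw [eq_div_iff hα]
          linear_combination ht
    · intro t ht
      rw [spread_iff hτ hτF hc α β γ Wsub hW] at ht
      have hz : (ptInf t).rep 2 = 0 := by
        unfold ptInf
        rw [mk_rep_zero_iff]
        cases t <;> rfl
      have hl : Lf α β γ (ptInf t).rep = 0 := by
        obtain ⟨a, ha⟩ := Projectivization.exists_smul_eq_mk_rep K _ (ptInfVec_ne t)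
        unfold ptInf
        rw [← ha, Units.smul_def, map_smul, ht, smul_zero]
      obtain ⟨A, hA, hA'⟩ := exists_pencil (F := F) α β γ hab (ptInf t) hz hl
      exact ⟨A, hA, bij_of hτF hc α β γ Wsub hW A hA'⟩
  · intro A P hA
    obtain ⟨α, β, γ, hab, h⟩ := pencil_abc A P hA
    obtain ⟨W, h4, hne, hW⟩ := exists_W hτF hc α β γ hab
    exact ⟨W, h4, hne, bij_of hτF hc α β γ W hW A h⟩

end BaerConics
end
end

section
/- Let B be a Baer subplane of PG(2,q²) tangent to ℓ∞ at the point T̄ = B ∩ ℓ∞, and let P̄ ∈ ℓ∞ with P̄ ≠ T̄. Then every ℓ∞-Baer pencil with vertex P̄ meets B either in an F_q-conic contained in B and containing T̄, or in the union of two lines of B, namely the unique line of B whose extension contains P̄ together with one line of B through T̄. Moreover, among the ℓ∞-Baer pencils with vertex P̄, exactly q²−1 are of the first type and exactly q+1 are of the second type, each of the latter containing a different one of the q+1 lines of B through T̄. -/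
open scoped Classical
open Matrix

noncomputable section

namespace BaerConics

variable {K : Type} [Field K] {m n : ℕ}

lemma mem_projPt {x : Fin n → K} {p : PP K n} :
    p ∈ projPt x ↔ ∃ c : K, c ≠ 0 ∧ p.rep = c • x := by
  constructor
  · rintro ⟨h, rfl⟩
    obtain ⟨a, ha⟩ := Projectivization.exists_smul_eq_mk_rep K x h
    exact ⟨a, a.ne_zero, ha.symm⟩
  · rintro ⟨c, hc, h⟩
    have hx : x ≠ 0 := by
      rintro rfl
      exact p.rep_nonzero (by simpa using h)
    refine ⟨hx, ?_⟩
    conv_lhs => rw [← p.mk_rep]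
    rw [Projectivization.mk_eq_mk_iff']
    exact ⟨c, h.symm⟩

/-- Coordinates of a point with respect to the frame `M`. -/
def co (M : Matrix (Fin 3) (Fin 3) K) (p : PP K 3) : Fin 3 → K := M⁻¹ *ᵥ p.rep

lemma mul_co {M : Matrix (Fin 3) (Fin 3) K} (hM : IsUnit M.det) (p : PP K 3) :
    M *ᵥ (co M p) = p.rep := by
  simp [co, Matrix.mulVec_mulVec, Matrix.mul_nonsing_inv M hM]

lemma co_ne {M : Matrix (Fin 3) (Fin 3) K} (hM : IsUnit M.det) (p : PP K 3) : co M p ≠ 0 := by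
  intro h
  have := mul_co hM p
  rw [h] at this
  exact p.rep_nonzero (by simpa using this.symm)

lemma co_eq_iff {M : Matrix (Fin 3) (Fin 3) K} (hM : IsUnit M.det) (p : PP K 3) (c : K)
    (v : Fin 3 → K) : co M p = c • v ↔ p.rep = c • (M *ᵥ v) := by
  constructor
  · intro h
    rw [← mul_co hM p, h, Matrix.mulVec_smul]
  · intro h
    rw [co, h, Matrix.mulVec_smul, Matrix.mulVec_mulVec, Matrix.nonsing_inv_mul M hM,
      Matrix.one_mulVec]

lemma co_inj {M : Matrix (Fin 3) (Fin 3) K} (hM : IsUnit M.det) {p p' : PP K 3} {c c' : K}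
    {v : Fin 3 → K} (h : co M p = c • v) (h' : co M p' = c' • v) : p = p' := by
  have key : ∀ {p : PP K 3} {c : K}, co M p = c • v → p ∈ projPt (M *ᵥ v) := by
    intro p c h
    rw [mem_projPt]
    refine ⟨c, ?_, (co_eq_iff hM p c v).1 h⟩
    rintro rfl
    exact co_ne hM p (by simpa using h)
  obtain ⟨_, h1⟩ := key h
  obtain ⟨_, h2⟩ := key h'
  rw [h1, h2]

lemma exists_pt {M : Matrix (Fin 3) (Fin 3) K} (hM : IsUnit M.det) {v : Fin 3 → K}
    (hv : v ≠ 0) : ∃ p : PP K 3, ∃ c : K, c ≠ 0 ∧ co M p = c • v := by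
  have hx : M *ᵥ v ≠ 0 := by
    intro h
    exact hv (mulVec_inj M hM (by simpa using h))
  obtain ⟨c, hc, h⟩ := mem_projPt.1 (⟨hx, rfl⟩ : Projectivization.mk K _ hx ∈ projPt (M *ᵥ v))
  exact ⟨_, c, hc, (co_eq_iff hM _ c v).2 h⟩

lemma mem_mimg {M : Matrix (Fin 3) (Fin 3) K} (hM : IsUnit M.det) (N : Matrix (Fin 3) (Fin 3) K)
    (X : Set (Fin 3 → K)) (p : PP K 3) :
    p ∈ mimg (M * N) X ↔ ∃ v ∈ X, ∃ c : K, c ≠ 0 ∧ co M p = c • (N *ᵥ v) := by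
  simp only [mimg, Set.mem_ofPred_eq, mem_projPt, co_eq_iff hM, Matrix.mulVec_mulVec]

lemma mem_mimg' {M : Matrix (Fin 3) (Fin 3) K} (hM : IsUnit M.det)
    (X : Set (Fin 3 → K)) (p : PP K 3) :
    p ∈ mimg M X ↔ ∃ v ∈ X, ∃ c : K, c ≠ 0 ∧ co M p = c • v := by
  simpa using mem_mimg hM 1 X p

lemma isFlat_iff {M : Matrix (Fin 3) (Fin 3) K} (hM : IsUnit M.det) (d : ℕ) (X : Set (PP K 3)) :
    IsFlat d X ↔ ∃ W : Submodule K (Fin 3 → K), Module.finrank K W = d + 1 ∧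
      X = {p | co M p ∈ W} := by
  let e : (Fin 3 → K) ≃ₗ[K] (Fin 3 → K) :=
    LinearEquiv.ofBijective M.mulVecLin
      (LinearMap.injective_iff_surjective.1 (mulVec_inj M hM) |> fun h => ⟨mulVec_inj M hM, h⟩)
  have he : ∀ v, e v = M *ᵥ v := fun v => rfl
  constructor
  · rintro ⟨W, hW, rfl⟩
    refine ⟨W.map e.symm.toLinearMap, ?_, ?_⟩
    · rw [LinearEquiv.finrank_map_eq]; exact hW
    · ext p
      simp only [ptsOf, Set.mem_ofPred_eq, Submodule.mem_map]
      constructor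
      · intro h
        refine ⟨p.rep, h, ?_⟩
        show e.symm p.rep = _
        rw [LinearEquiv.symm_apply_eq, he, mul_co hM]
      · rintro ⟨y, hy, h⟩
        have h' : e.symm y = co M p := h
        rw [LinearEquiv.symm_apply_eq, he, mul_co hM] at h'
        rwa [← h']
  · rintro ⟨W, hW, rfl⟩
    refine ⟨W.map e.toLinearMap, ?_, ?_⟩
    · rw [LinearEquiv.finrank_map_eq]; exact hW
    · ext p
      simp only [ptsOf, Set.mem_ofPred_eq, Submodule.mem_map]
      constructor
      · intro h
        exact ⟨co M p, h, mul_co hM p⟩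
      · rintro ⟨y, hy, h⟩
        have h' : M *ᵥ y = p.rep := h
        rw [← mul_co hM] at h'
        rwa [← mulVec_inj M hM h']

lemma mem_lineTh {M : Matrix (Fin 3) (Fin 3) K} (hM : IsUnit M.det) (P X p : PP K 3) :
    p ∈ lineTh P X ↔ ∃ a b : K, co M p = a • co M P + b • co M X := by
  simp only [lineTh, ptsOf, Set.mem_ofPred_eq, Submodule.mem_span_pair]
  constructor
  · rintro ⟨a, b, h⟩
    refine ⟨a, b, ?_⟩
    simp only [co, ← h, Matrix.mulVec_add, Matrix.mulVec_smul]
  · rintro ⟨a, b, h⟩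
    refine ⟨a, b, ?_⟩
    rw [← mul_co hM p, h, Matrix.mulVec_add, Matrix.mulVec_smul, Matrix.mulVec_smul,
      mul_co hM, mul_co hM]

/-- The normalized situation. -/
structure Nrm (F : Type) {K : Type} [Field F] [Field K] [Algebra F K] (τ : K)
    (M : Matrix (Fin 3) (Fin 3) K) (B : Set (PP K 3)) (T P : PP K 3) : Prop where
  hM : IsUnit M.det
  hz : ∀ p : PP K 3, p.rep 2 = co M p 1 + τ * co M p 2
  hB : ∀ p, p ∈ B ↔ ∃ u : Fin 3 → F, ∃ c : K, c ≠ 0 ∧ co M p = c • algVec F u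
  hT : ∃ c : K, c ≠ 0 ∧ co M T = c • ![1, 0, 0]
  hP : ∃ c : K, c ≠ 0 ∧ co M P = c • ![0, -τ, 1]

lemma algVec_mul {F : Type} [Field F] [Algebra F K] (E : Matrix (Fin 3) (Fin 3) F)
    (u : Fin 3 → F) : (E.map (algebraMap F K)) *ᵥ algVec F u = algVec F (E *ᵥ u) := by
  ext i
  simp [algVec, Matrix.mulVec, dotProduct, Fin.sum_univ_three]

lemma coord_zero {F : Type} [Field F] [Algebra F K] {τ : K}
    (hτF : τ ∉ Set.range (algebraMap F K)) {x y : F}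
    (h : algebraMap F K x + τ * algebraMap F K y = 0) : x = 0 ∧ y = 0 := by
  have hy : y = 0 := by
    by_contra hy
    apply hτF
    refine ⟨-x / y, ?_⟩
    have : algebraMap F K y ≠ 0 := by simpa using hy
    rw [map_div₀, map_neg, div_eq_iff this]
    linear_combination -h
  subst hy
  simpa using h

lemma exists_nrm {F K : Type} [Field F] [Field K] [Fintype F] [Fintype K] [Algebra F K]
    (q : ℕ) (hq : Fintype.card F = q) (hK : Fintype.card K = q ^ 2)
    (τ : K) (hτF : τ ∉ Set.range (algebraMap F K))
    (c0 c1 : K → F)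
    (hc : ∀ x : K, x = algebraMap F K (c0 x) + algebraMap F K (c1 x) * τ)
    (B : Set (PP K 3)) (hB : IsBaerSubplane F B)
    (T : PP K 3) (hT : B ∩ linf K = {T})
    (P : PP K 3) (hP : P ∈ linf K) (hPT : P ≠ T) : ∃ M, Nrm F τ M B T P := by
  obtain ⟨M, hM, rfl⟩ := hB
  have hmem : ∀ p, p ∈ mimg M (subplaneVecs F K) ↔
      ∃ u : Fin 3 → F, ∃ c : K, c ≠ 0 ∧ co M p = c • algVec F u := by
    intro p
    rw [mem_mimg' hM]
    constructor
    · rintro ⟨v, ⟨w, hw, rfl⟩, c, hc, h⟩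
      exact ⟨w, c, hc, h⟩
    · rintro ⟨u, c, hc, h⟩
      refine ⟨_, ⟨u, ?_, rfl⟩, c, hc, h⟩
      rintro rfl
      apply co_ne hM p
      rw [h]; ext i; simp [algVec]
  -- the functional
  have hTB : T ∈ mimg M (subplaneVecs F K) ∩ linf K := by rw [hT]; rfl
  obtain ⟨e, cT, hcT, hTe⟩ := (hmem T).1 hTB.1
  have he : e ≠ 0 := by
    rintro rfl
    apply co_ne hM T
    rw [hTe]; ext i; simp [algVec]
  let φ : (Fin 3 → F) →ₗ[F] K :=
    { toFun := fun u => (M *ᵥ algVec F u) 2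
      map_add' := by
        intro u v
        simp [algVec, Matrix.mulVec, dotProduct, Fin.sum_univ_three]; ring
      map_smul' := by
        intro a u
        simp [algVec, Matrix.mulVec, dotProduct, Fin.sum_univ_three, Algebra.smul_def]; ring }
  have hφ : ∀ u, φ u = (M *ᵥ algVec F u) 2 := fun u => rfl
  have hφe : φ e = 0 := by
    have h := (co_eq_iff hM T cT _).1 hTe
    have h2 : T.rep 2 = 0 := hTB.2
    rw [h] at h2
    rw [hφ]
    simpa [hcT] using h2
  have hker : LinearMap.ker φ = Submodule.span F {e} := by
    apply le_antisymm
    · intro u hu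
      by_cases hu0 : u = 0
      · subst hu0; simp
      have hau : algVec F u ≠ (0 : Fin 3 → K) := by
        intro h
        apply hu0
        ext i
        have := congrFun h i
        simpa [algVec] using this
      obtain ⟨p, c, hc', hp⟩ := exists_pt hM hau
      have hpT : p = T := by
        have : p ∈ mimg M (subplaneVecs F K) ∩ linf K := by
          refine ⟨(hmem p).2 ⟨u, c, hc', hp⟩, ?_⟩
          show p.rep 2 = 0
          rw [(co_eq_iff hM p c _).1 hp]
          have hu' : φ u = 0 := hu
          rw [hφ] at hu'
          simp [hu']
        rw [hT] at this
        exact this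
      subst hpT
      rw [hTe] at hp
      -- u and e proportional over K, hence over F
      obtain ⟨i, hi⟩ := Function.ne_iff.1 he
      have hi' : algebraMap F K (e i) ≠ 0 := by simpa using hi
      rw [Submodule.mem_span_singleton]
      refine ⟨u i / e i, ?_⟩
      ext j
      have hI := congrFun hp i
      have hJ := congrFun hp j
      simp only [algVec, Pi.smul_apply, smul_eq_mul] at hI hJ
      apply (algebraMap F K).injective
      simp only [Pi.smul_apply, smul_eq_mul, map_mul, map_div₀]
      field_simp
      apply mul_left_cancel₀ hcT
      apply mul_left_cancel₀ hc'
      linear_combination (c * algebraMap F K (u i)) * hJ - (c * algebraMap F K (u j)) * hI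
    · rw [Submodule.span_singleton_le_iff_mem]; exact hφe
  have hsurj : Function.Surjective φ := by
    have h2 : Module.finrank F K = 2 := by
      have h := Module.card_eq_pow_finrank (K := F) (V := K)
      rw [hK, hq] at h
      have hq1 : 1 < q := by rw [← hq]; exact Fintype.one_lt_card
      exact (Nat.pow_right_injective hq1 h).symm
    have h3 := LinearMap.finrank_range_add_finrank_ker φ
    rw [hker, finrank_span_singleton he] at h3
    simp at h3
    rw [← LinearMap.range_eq_top]
    apply Submodule.eq_top_of_finrank_eq
    omega
  obtain ⟨e1, he1⟩ := hsurj 1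
  obtain ⟨e2, he2⟩ := hsurj τ
  have hdet : ∀ s t : F, IsUnit (Matrix.of ![e, e1 + s • e, e2 + t • e])ᵀ.det := by
    intro s t
    rw [isUnit_iff_ne_zero]
    intro h0
    obtain ⟨v, hv, hv0⟩ := Matrix.exists_mulVec_eq_zero_iff.2 h0
    have hs : v 0 • e + v 1 • (e1 + s • e) + v 2 • (e2 + t • e) = 0 := by
      rw [← hv0]
      ext i
      fin_cases i <;>
      simp [Matrix.mulVec, dotProduct, Fin.sum_univ_three] <;> ring
    have h1 := congrArg φ hs
    simp only [map_add, map_smul, hφe, he1, he2, map_zero, smul_zero, add_zero, zero_add] at h1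
    simp only [Algebra.smul_def, mul_one] at h1
    obtain ⟨hv1, hv2⟩ := coord_zero hτF (x := v 1) (y := v 2) (by rw [← h1]; ring)
    rw [hv1, hv2] at hs
    have hv00 : v 0 = 0 := by simpa [he] using hs
    apply hv
    ext i
    fin_cases i <;> simp [hv00, hv1, hv2]
  -- First frame, to read off the coordinates of P
  have frame : ∀ s t : F, ∃ M' : Matrix (Fin 3) (Fin 3) K, IsUnit M'.det ∧
      (∀ v : Fin 3 → K, M' *ᵥ v = M *ᵥ ((v 0 + v 1 * algebraMap F K s + v 2 * algebraMap F K t) •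
        algVec F e + v 1 • algVec F e1 + v 2 • algVec F e2)) ∧
      (∀ p, p ∈ mimg M (subplaneVecs F K) ↔
        ∃ u : Fin 3 → F, ∃ c : K, c ≠ 0 ∧ co M' p = c • algVec F u) := by
    intro s t
    set E := (Matrix.of ![e, e1 + s • e, e2 + t • e])ᵀ with hE
    have hEd : IsUnit E.det := hdet s t
    have hM' : IsUnit (M * E.map (algebraMap F K)).det := by
      rw [Matrix.det_mul]
      refine hM.mul ?_
      have := RingHom.map_det (algebraMap F K) E
      rw [RingHom.mapMatrix_apply] at this
      rw [← this]
      exact hEd.map _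
    refine ⟨M * E.map (algebraMap F K), hM', ?_, ?_⟩
    · intro v
      rw [← Matrix.mulVec_mulVec]
      congr 1
      ext i
      simp [hE, algVec, Matrix.mulVec, dotProduct, Fin.sum_univ_three]
      fin_cases i <;> simp <;> ring
    · intro p
      rw [hmem]
      constructor
      · rintro ⟨u, c, hc', h⟩
        refine ⟨E⁻¹ *ᵥ u, c, hc', ?_⟩
        rw [co_eq_iff hM', ← Matrix.mulVec_mulVec, algVec_mul, Matrix.mulVec_mulVec,
          Matrix.mul_nonsing_inv E hEd, Matrix.one_mulVec]
        exact (co_eq_iff hM _ _ _).1 h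
      · rintro ⟨u, c, hc', h⟩
        refine ⟨E *ᵥ u, c, hc', ?_⟩
        rw [co_eq_iff hM', ← Matrix.mulVec_mulVec, algVec_mul] at h
        exact (co_eq_iff hM _ _ _).2 h
  have hrow : ∀ {s t : F} {M' : Matrix (Fin 3) (Fin 3) K}, (∀ v : Fin 3 → K, M' *ᵥ v =
      M *ᵥ ((v 0 + v 1 * algebraMap F K s + v 2 * algebraMap F K t) •
        algVec F e + v 1 • algVec F e1 + v 2 • algVec F e2)) →
      ∀ v, (M' *ᵥ v) 2 = v 1 + τ * v 2 := by
    intro s t M' h v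
    rw [hφ] at hφe he1 he2
    rw [h v, Matrix.mulVec_add, Matrix.mulVec_add, Matrix.mulVec_smul, Matrix.mulVec_smul,
      Matrix.mulVec_smul]
    simp only [Pi.add_apply, Pi.smul_apply, hφe, he1, he2, smul_eq_mul]
    ring
  obtain ⟨M0, hM0, hv0, hm0⟩ := frame 0 0
  have hz0 := hrow hv0 (co M0 P)
  have hP2 : P.rep 2 = 0 := hP
  rw [mul_co hM0, hP2] at hz0
  set y := co M0 P with hy
  have hTM0 : co M0 T = cT • ![1, 0, 0] := by
    rw [co_eq_iff hM0, hv0, (co_eq_iff hM _ _ _).1 hTe]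
    simp
  have hy2 : y 2 ≠ 0 := by
    intro h2
    rw [h2] at hz0
    apply hPT
    refine co_inj hM0 (v := ![1, 0, 0]) (c := y 0) ?_ hTM0
    rw [← hy]
    ext i
    fin_cases i
    · simp
    · simpa using hz0.symm
    · simpa using h2
  set k := y 0 / y 2 with hk
  obtain ⟨M1, hM1, hv1, hm1⟩ := frame (-c1 k) (c0 k)
  refine ⟨M1, hM1, ?_, hm1, ⟨cT, hcT, ?_⟩, ⟨y 2, hy2, ?_⟩⟩
  · intro p
    rw [← hrow hv1, mul_co hM1]
  · rw [co_eq_iff hM1, hv1, (co_eq_iff hM _ _ _).1 hTe]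
    simp
  · rw [co_eq_iff hM1, hv1, ← mul_co hM0 P, ← hy, hv0, ← Matrix.mulVec_smul]
    congr 1
    have hk' : y 0 = y 2 * k := by rw [hk]; field_simp
    have hy1 : y 1 = - τ * y 2 := by linear_combination -hz0
    have := hc k
    ext i
    simp
    rw [hk', hy1]
    linear_combination (y 2 * algVec F e i) * this

/-- The pencil with vertex `P` attached to a subset of `K`. -/
def pen (M : Matrix (Fin 3) (Fin 3) K) (A : Set K) : Set (PP K 3) :=
  {p | p.rep 2 = 0 ∨ co M p 0 / p.rep 2 ∈ A}

/-- Affine `F`-lines of `K`. -/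
def AffL (F : Type) {K : Type} [Field F] [Field K] [Algebra F K] (A : Set K) : Prop :=
  ∃ a b : K, a ≠ 0 ∧ A = {x | ∃ θ : F, x = b + algebraMap F K θ * a}

lemma Nrm.mem_lineTh {F : Type} [Field F] [Algebra F K] {τ : K}
    {M : Matrix (Fin 3) (Fin 3) K} {B : Set (PP K 3)} {T P : PP K 3}
    (N : Nrm F τ M B T P) (X p : PP K 3) (hX : co M X 0 ≠ 0 ∨ X.rep 2 ≠ 0) :
    p ∈ lineTh P X ↔ co M p 0 * X.rep 2 = p.rep 2 * co M X 0 := by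
  obtain ⟨cP, hcP, hP⟩ := N.hP
  rw [BaerConics.mem_lineTh N.hM]
  constructor
  · rintro ⟨a, b, h⟩
    rw [N.hz p, N.hz X, h, hP]
    simp
    ring
  · intro h
    have key : ∀ b : K, co M p 0 = b * co M X 0 → p.rep 2 = b * X.rep 2 →
        ∃ a b : K, co M p = a • co M P + b • co M X := by
      intro b h0 h2
      refine ⟨(co M p 2 - b * co M X 2) / cP, b, ?_⟩
      rw [N.hz p, N.hz X] at h2
      rw [hP]
      ext i
      fin_cases i
      · simpa using h0
      · simp
        field_simp
        linear_combination h2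
      · simp
        field_simp
        ring
    rcases hX with hX | hX
    · refine key (co M p 0 / co M X 0) (by field_simp) ?_
      field_simp
      linear_combination -h
    · refine key (p.rep 2 / X.rep 2) ?_ (by field_simp)
      field_simp
      linear_combination h

lemma Nrm.mem_union {F : Type} [Field F] [Algebra F K] {τ : K}
    {M : Matrix (Fin 3) (Fin 3) K} {B : Set (PP K 3)} {T P : PP K 3}
    (N : Nrm F τ M B T P) (M' : Matrix (Fin 3) (Fin 3) K) (hM' : IsUnit M'.det)
    (N' : Matrix (Fin 3) (Fin 3) K) (hN : M' = M * N') (f1 z1 f2 z2 : K)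
    (hf1 : f1 = N' 0 0) (hz1 : z1 = N' 1 0 + τ * N' 2 0)
    (hf2 : f2 = N' 0 1) (hz2 : z2 = N' 1 1 + τ * N' 2 1)
    (hd : f1 * z2 - f2 * z1 ≠ 0) (p : PP K 3) :
    p ∈ (⋃ X ∈ mimg M' (sublineVecs F K), lineTh P X) ↔
      co M p 0 * z1 = p.rep 2 * f1 ∨
      ∃ θ : F, co M p 0 * (algebraMap F K θ * z1 + z2) =
        p.rep 2 * (algebraMap F K θ * f1 + f2) := by
  have hcoX : ∀ (X : PP K 3) (c x y : K), co M X = c • (N' *ᵥ ![x, y, 0]) →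
      co M X 0 = c * (x * f1 + y * f2) ∧ X.rep 2 = c * (x * z1 + y * z2) := by
    intro X c x y h
    rw [N.hz X, h]
    simp only [Matrix.mulVec, dotProduct, Fin.sum_univ_three, hf1, hf2, hz1, hz2, Pi.smul_apply,
      smul_eq_mul, Matrix.cons_val]
    constructor <;> ring
  have key : ∀ (X : PP K 3) (c x y : K), c ≠ 0 → (x ≠ 0 ∨ y ≠ 0) →
      co M X = c • (N' *ᵥ ![x, y, 0]) →
      (p ∈ lineTh P X ↔ co M p 0 * (x * z1 + y * z2) = p.rep 2 * (x * f1 + y * f2)) := by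
    intro X c x y hc hxy h
    obtain ⟨h0, h2⟩ := hcoX X c x y h
    rw [N.mem_lineTh X p, h0, h2]
    · constructor
      · intro h
        apply mul_left_cancel₀ hc
        linear_combination h
      · intro h
        linear_combination c * h
    · rw [h0, h2]
      by_contra hcon
      push Not at hcon
      obtain ⟨ha, hb⟩ := hcon
      simp only [mul_eq_zero, hc, false_or] at ha hb
      rcases hxy with hx | hy
      · apply hd
        apply mul_left_cancel₀ hx
        linear_combination z2 * ha - f2 * hb
      · apply hd
        apply mul_left_cancel₀ hy
        linear_combination f1 * hb - z1 * ha
  simp only [Set.mem_iUnion, hN, exists_prop]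
  constructor
  · rintro ⟨X, hX, hp⟩
    rw [mem_mimg N.hM] at hX
    obtain ⟨v, hv, c, hc, h⟩ := hX
    rcases hv with ⟨θ, rfl⟩ | rfl
    · right
      refine ⟨θ, ?_⟩
      have := (key X c _ _ hc (Or.inr one_ne_zero) h).1 hp
      linear_combination this
    · left
      have := (key X c _ _ hc (Or.inl one_ne_zero) h).1 hp
      linear_combination this
  · have ex : ∀ v : Fin 3 → K, v ∈ sublineVecs F K → ∃ X : PP K 3, ∃ c : K, c ≠ 0 ∧
        co M X = c • (N' *ᵥ v) ∧ X ∈ mimg (M * N') (sublineVecs F K) := by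
      intro v hv
      have hv0 : v ≠ 0 := by
        rcases hv with ⟨θ, rfl⟩ | rfl
        · intro h; simpa using congrFun h 1
        · intro h; simpa using congrFun h 0
      obtain ⟨X, c, hc, h⟩ := exists_pt hM' hv0
      rw [co_eq_iff hM', hN, ← Matrix.mulVec_mulVec, ← co_eq_iff N.hM] at h
      exact ⟨X, c, hc, h, (mem_mimg N.hM _ _ _).2 ⟨v, hv, c, hc, h⟩⟩
    rintro (h | ⟨θ, h⟩)
    · obtain ⟨X, c, hc, hX, hm⟩ := ex ![1, 0, 0] (Or.inr rfl)
      refine ⟨X, hm, (key X c _ _ hc (Or.inl one_ne_zero) hX).2 ?_⟩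
      linear_combination h
    · obtain ⟨X, c, hc, hX, hm⟩ := ex ![algebraMap F K θ, 1, 0] (Or.inl ⟨θ, rfl⟩)
      refine ⟨X, hm, (key X c _ _ hc (Or.inr one_ne_zero) hX).2 ?_⟩
      linear_combination h

lemma Nrm.pencil_iff {F : Type} [Field F] [Algebra F K] {τ : K}
    {M : Matrix (Fin 3) (Fin 3) K} {B : Set (PP K 3)} {T P : PP K 3}
    (N : Nrm F τ M B T P) (𝒦 : Set (PP K 3)) :
    IsLinfBaerPencil F 𝒦 P ↔ ∃ A : Set K, AffL F A ∧ 𝒦 = pen M A := by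
  obtain ⟨cP, hcP, hP⟩ := N.hP
  constructor
  · rintro ⟨hPl, ℓ, b, ⟨M', hM', rfl, rfl⟩, hPℓ, ⟨X, ⟨hXb, hXl⟩, -⟩, rfl⟩
    obtain ⟨N', hN⟩ : ∃ N', M' = M * N' :=
      ⟨M⁻¹ * M', by rw [← Matrix.mul_assoc, Matrix.mul_nonsing_inv M N.hM, Matrix.one_mul]⟩
    have hN'd : IsUnit N'.det := by
      rw [hN, Matrix.det_mul] at hM'
      exact isUnit_of_mul_isUnit_right hM'
    set f1 := N' 0 0 with hf1
    set z1 := N' 1 0 + τ * N' 2 0 with hz1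
    set f2 := N' 0 1 with hf2
    set z2 := N' 1 1 + τ * N' 2 1 with hz2
    -- a point of ℓ with f = z = 0 would be P
    have hno : ∀ x y : K, x * f1 + y * f2 = 0 → x * z1 + y * z2 = 0 → x = 0 ∧ y = 0 := by
      intro x y h0 h1
      by_contra hxy
      have hv : (![x, y, 0] : Fin 3 → K) ≠ 0 := by
        intro h
        apply hxy
        exact ⟨by simpa using congrFun h 0, by simpa using congrFun h 1⟩
      have hv' : N' *ᵥ ![x, y, 0] ≠ 0 := by
        intro h
        exact hv (mulVec_inj N' hN'd (by simpa using h))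
      have hw : N' *ᵥ ![x, y, 0] = (N' 2 0 * x + N' 2 1 * y) • ![0, -τ, 1] := by
        rw [hz1, hz2] at h1
        ext i
        fin_cases i
        · simp [Matrix.mulVec, dotProduct, Fin.sum_univ_three]
          linear_combination h0
        · simp [Matrix.mulVec, dotProduct, Fin.sum_univ_three]
          linear_combination h1
        · simp [Matrix.mulVec, dotProduct, Fin.sum_univ_three]
      set k := N' 2 0 * x + N' 2 1 * y with hk
      have hk0 : k ≠ 0 := by
        intro h
        apply hv'
        rw [hw, h, zero_smul]
      apply hPℓ
      rw [hN, mem_mimg N.hM]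
      refine ⟨![x, y, 0], ⟨hv, by simp⟩, cP / k, div_ne_zero hcP hk0, ?_⟩
      rw [hw, smul_smul, div_mul_cancel₀ _ hk0, hP]
    have hd : f1 * z2 - f2 * z1 ≠ 0 := by
      intro h
      obtain ⟨h1, h2⟩ := hno z2 (-z1) (by linear_combination h) (by ring)
      have h2' : z1 = 0 := by simpa using h2
      obtain ⟨h3, h4⟩ := hno f2 (-f1) (by ring) (by rw [h1, h2']; ring)
      have h4' : f1 = 0 := by simpa using h4
      have := (hno 1 0 (by rw [h4']; ring) (by rw [h2']; ring)).1
      exact one_ne_zero this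
    have hu := N.mem_union M' hM' N' hN f1 z1 f2 z2 hf1 hz1 hf2 hz2 hd
    have hX2 : X.rep 2 = 0 := hXl
    rw [hN, mem_mimg N.hM] at hXb
    obtain ⟨v, hv, c, hc, h⟩ := hXb
    rcases hv with ⟨θ0, rfl⟩ | rfl
    · have hzz : algebraMap F K θ0 * z1 + z2 = 0 := by
        rw [N.hz, h] at hX2
        simp [Matrix.mulVec, dotProduct, Fin.sum_univ_three] at hX2
        apply mul_left_cancel₀ hc
        rw [hz1, hz2]
        linear_combination hX2
      have hz10 : z1 ≠ 0 := by
        intro h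
        apply hd
        rw [h] at hzz ⊢
        have : z2 = 0 := by simpa using hzz
        rw [this]; ring
      have hff : algebraMap F K θ0 * f1 + f2 ≠ 0 := by
        intro h
        have := (hno _ 1 (by simpa using h) (by simpa using hzz)).2
        exact one_ne_zero this
      refine ⟨_, ⟨(algebraMap F K θ0 * f1 + f2) / z1, f1 / z1, div_ne_zero hff hz10, rfl⟩, ?_⟩
      ext p
      rw [hu p]
      simp only [pen, Set.mem_ofPred_eq]
      by_cases hp : p.rep 2 = 0
      · simp only [hp, true_or, iff_true]
        right
        refine ⟨θ0, ?_⟩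
        rw [hzz]; ring
      · simp only [hp, false_or]
        constructor
        · rintro (h | ⟨θ, h⟩)
          · refine ⟨0, ?_⟩
            simp
            field_simp
            linear_combination h
          · have hz2' : z2 = - algebraMap F K θ0 * z1 := by linear_combination hzz
            have hθ : algebraMap F K θ - algebraMap F K θ0 ≠ 0 := by
              intro h0
              have e : algebraMap F K θ = algebraMap F K θ0 := sub_eq_zero.1 h0
              rw [e, hzz] at h
              simp [hp, hff] at h
            refine ⟨1 / (θ - θ0), ?_⟩
            rw [hz2'] at h
            simp
            field_simp
            linear_combination h
        · rintro ⟨θ, h⟩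
          by_cases hθ : θ = 0
          · left
            rw [hθ] at h
            simp at h
            field_simp at h
            linear_combination h
          · right
            have hθ' : algebraMap F K θ ≠ 0 := by simpa using hθ
            refine ⟨θ0 + 1 / θ, ?_⟩
            have hz2' : z2 = - algebraMap F K θ0 * z1 := by linear_combination hzz
            rw [hz2']
            simp
            field_simp at h ⊢
            linear_combination h
    · have hz10 : z1 = 0 := by
        rw [N.hz, h] at hX2
        simp [Matrix.mulVec, dotProduct, Fin.sum_univ_three] at hX2
        apply mul_left_cancel₀ hc
        rw [hz1]
        linear_combination hX2
      rw [hz10] at hd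
      have hf10 : f1 ≠ 0 := by
        intro h
        apply hd; rw [h]; ring
      have hz20 : z2 ≠ 0 := by
        intro h
        apply hd; rw [h]; ring
      refine ⟨_, ⟨f1 / z2, f2 / z2, div_ne_zero hf10 hz20, rfl⟩, ?_⟩
      ext p
      rw [hu p, hz10]
      simp only [pen, Set.mem_ofPred_eq]
      by_cases hp : p.rep 2 = 0
      · simp [hp]
      · simp only [hp, false_or, mul_zero, zero_add]
        constructor
        · rintro (h | ⟨θ, h⟩)
          · exact absurd h.symm (mul_ne_zero hp hf10)
          · refine ⟨θ, ?_⟩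
            field_simp
            linear_combination h
        · rintro ⟨θ, h⟩
          right
          refine ⟨θ, ?_⟩
          field_simp at h
          linear_combination h
  · rintro ⟨A, ⟨a, b, ha, rfl⟩, rfl⟩
    refine ⟨?_, ?_⟩
    · show P.rep 2 = 0
      rw [N.hz, hP]
      simp
      ring
    set N' : Matrix (Fin 3) (Fin 3) K := !![a, b, 0; 0, 1, 0; 0, 0, 1] with hN'
    have hM' : IsUnit (M * N').det := by
      rw [Matrix.det_mul]
      refine N.hM.mul ?_
      rw [isUnit_iff_ne_zero, hN', Matrix.det_fin_three]
      simpa using ha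
    refine ⟨mimg (M * N') (linfVecs K), mimg (M * N') (sublineVecs F K),
      ⟨M * N', hM', rfl, rfl⟩, ?_, ?_, ?_⟩
    · rw [mem_mimg N.hM]
      rintro ⟨v, ⟨hv, hv2⟩, c, hc, h⟩
      rw [hP] at h
      have := congrFun h 2
      simp [hN', Matrix.mulVec, dotProduct, Fin.sum_univ_three, hv2, hcP] at this
    · obtain ⟨cT, hcT, hT⟩ := N.hT
      refine ⟨T, ⟨?_, ?_⟩, ?_⟩
      · rw [mem_mimg N.hM]
        refine ⟨![1, 0, 0], Or.inr rfl, cT / a, div_ne_zero hcT ha, ?_⟩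
        rw [hT]
        ext i
        fin_cases i <;> simp [hN', Matrix.mulVec, dotProduct, Fin.sum_univ_three, ha]
      · show T.rep 2 = 0
        rw [N.hz, hT]
        simp
      · rintro X ⟨hX, hX2⟩
        have hX2 : X.rep 2 = 0 := hX2
        rw [mem_mimg N.hM] at hX
        obtain ⟨v, hv, c, hc, h⟩ := hX
        rcases hv with ⟨θ, rfl⟩ | rfl
        · rw [N.hz, h] at hX2
          simp [hN', Matrix.mulVec, dotProduct, Fin.sum_univ_three, hc] at hX2
        · refine co_inj N.hM (c := c * a) ?_ hT
          rw [h]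
          ext i
          fin_cases i <;> simp [hN', Matrix.mulVec, dotProduct, Fin.sum_univ_three]
    · ext p
      rw [N.mem_union (M * N') hM' N' rfl a 0 b 1 (by simp [hN']) (by simp [hN'])
        (by simp [hN']) (by simp [hN']) (by simpa using ha) p]
      simp only [pen, Set.mem_ofPred_eq]
      by_cases hp : p.rep 2 = 0
      · simp [hp]
      · simp only [hp, false_or, mul_zero, zero_add, mul_one]
        constructor
        · rintro ⟨θ, h⟩
          right
          refine ⟨θ, ?_⟩
          field_simp at h
          linear_combination h
        · rintro (h | ⟨θ, h⟩)
          · exact absurd h.symm (mul_ne_zero hp ha)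
          · refine ⟨θ, ?_⟩
            field_simp
            linear_combination h

lemma Nrm.mem_pen {F : Type} [Field F] [Algebra F K] {τ : K}
    {M : Matrix (Fin 3) (Fin 3) K} {B : Set (PP K 3)} {T P : PP K 3}
    (N : Nrm F τ M B T P) {A : Set K} {p : PP K 3} {c : K} {v : Fin 3 → K} (hc : c ≠ 0)
    (h : co M p = c • v) : p ∈ pen M A ↔ v 1 + τ * v 2 = 0 ∨ v 0 / (v 1 + τ * v 2) ∈ A := by
  have h2 : p.rep 2 = c * (v 1 + τ * v 2) := by
    rw [N.hz, h]; simp; ring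
  have h0 : co M p 0 = c * v 0 := by rw [h]; simp
  simp only [pen, Set.mem_ofPred_eq]
  rw [h2, h0, mul_div_mul_left _ _ hc]
  simp [hc]

lemma Nrm.pen_inj {F : Type} [Field F] [Algebra F K] {τ : K}
    {M : Matrix (Fin 3) (Fin 3) K} {B : Set (PP K 3)} {T P : PP K 3}
    (N : Nrm F τ M B T P) : Function.Injective (pen M) := by
  intro A A' h
  ext α
  have hv : (![α, 1, 0] : Fin 3 → K) ≠ 0 := by
    intro h; simpa using congrFun h 1
  obtain ⟨p, c, hc, hp⟩ := exists_pt N.hM hv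
  have h1 := N.mem_pen (A := A) hc hp
  have h2 := N.mem_pen (A := A') hc hp
  rw [h] at h1
  have h3 := h1.symm.trans h2
  simpa using h3

lemma finrank_pair {v w : Fin 3 → K} (h : ∀ a b : K, a • v + b • w = 0 → a = 0 ∧ b = 0) :
    Module.finrank K (Submodule.span K {v, w}) = 2 := by
  have hl : LinearIndependent K ![v, w] := LinearIndependent.pair_iff.2 h
  have := finrank_span_eq_card hl
  rw [Matrix.range_cons, Matrix.range_cons, Matrix.range_empty, Set.union_empty,
    Set.singleton_union] at this
  simpa using this

lemma card_line {F : Type} [Field F] [Fintype F] [Algebra F K]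
    {M : Matrix (Fin 3) (Fin 3) K} (hM : IsUnit M.det) (x y : Fin 3 → F)
    (hxy : ∀ a b : K, a • algVec F x + b • algVec F y = (0 : Fin 3 → K) → a = 0 ∧ b = 0)
    (S : Set (PP K 3))
    (hS : ∀ p, p ∈ S ↔ ∃ α β : F, ∃ c : K, c ≠ 0 ∧ co M p = c • algVec F (α • x + β • y)) :
    S.ncard = Fintype.card F + 1 := by
  have hal : ∀ α β : F, (algVec F (α • x + β • y) : Fin 3 → K) =
      algebraMap F K α • algVec F x + algebraMap F K β • algVec F y := by
    intro α β
    ext i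
    simp [algVec, Algebra.smul_def]
  have hne : ∀ α β : F, (α ≠ 0 ∨ β ≠ 0) → (algVec F (α • x + β • y) : Fin 3 → K) ≠ 0 := by
    intro α β h h0
    rw [hal] at h0
    have := hxy _ _ h0
    simp at this
    tauto
  have hex : ∀ o : Option F, ∃ p : PP K 3, ∃ c : K, c ≠ 0 ∧
      co M p = c • algVec F ((o.elim 1 id : F) • x + (o.elim 0 (fun _ => 1) : F) • y) := by
    intro o
    apply exists_pt hM
    apply hne
    cases o <;> simp
  choose g cg hcg hg using hex
  have hinj : Function.Injective g := by
    intro o o' h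
    have h1 := hg o
    rw [h, hg o', hal, hal] at h1
    have h2 := hxy (cg o' * algebraMap F K (o'.elim 1 id) - cg o * algebraMap F K (o.elim 1 id))
      (cg o' * algebraMap F K (o'.elim 0 (fun _ => 1)) -
        cg o * algebraMap F K (o.elim 0 (fun _ => 1))) (by
        rw [sub_smul, sub_smul, mul_smul, mul_smul, mul_smul, mul_smul]
        rw [smul_add, smul_add] at h1
        linear_combination (exp := 1) h1)
    have hco := hcg o
    have hco' := hcg o'
    cases o <;> cases o' <;> simp at h2 ⊢
    · exact absurd h2.2 hco'
    · exact absurd h2.2 hco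
    · obtain ⟨ha, hb⟩ := h2
      have hb' := sub_eq_zero.1 hb
      rw [hb'] at ha
      have ha' := mul_left_cancel₀ hco (sub_eq_zero.1 ha)
      exact ((algebraMap F K).injective ha').symm
  have hr : S = Set.range g := by
    ext p
    rw [hS]
    constructor
    · rintro ⟨α, β, c, hc, h⟩
      by_cases hβ : β = 0
      · refine ⟨none, co_inj hM (v := algVec F x) (c := cg none) (c' := c * algebraMap F K α) ?_ ?_⟩
        · simpa using hg none
        · rw [h, hal, hβ]; simp [mul_smul]
      · have hβ' : algebraMap F K β ≠ 0 := by simpa using hβ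
        refine ⟨some (α / β), co_inj hM (c' := c * algebraMap F K β) (hg (some (α / β))) ?_⟩
        rw [h, hal, hal, mul_smul]
        congr 1
        simp [smul_smul, mul_div_cancel₀ _ hβ']
    · rintro ⟨o, rfl⟩
      exact ⟨_, _, _, hcg o, hg o⟩
  rw [hr, ← Set.image_univ, Set.ncard_image_of_injective _ hinj, Set.ncard_univ,
    Nat.card_eq_fintype_card, Fintype.card_option]

/-- The line of `B` whose extension contains `P`. -/
def lP (M : Matrix (Fin 3) (Fin 3) K) (B : Set (PP K 3)) : Set (PP K 3) :=
  {p | p ∈ B ∧ co M p 0 = 0}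

/-- The lines of `B` through `T`. -/
def lT (F : Type) [Field F] [Algebra F K] (M : Matrix (Fin 3) (Fin 3) K) (B : Set (PP K 3))
    (x y : F) : Set (PP K 3) :=
  {p | p ∈ B ∧ co M p 1 * algebraMap F K y = co M p 2 * algebraMap F K x}

lemma Nrm.lP_line {F : Type} [Field F] [Fintype F] [Algebra F K] {τ : K}
    {M : Matrix (Fin 3) (Fin 3) K} {B : Set (PP K 3)} {T P : PP K 3}
    (N : Nrm F τ M B T P) {q : ℕ} (hq : Fintype.card F = q) :
    ∃ ℓ, IsLineOfExt q B (lP M B) ℓ ∧ P ∈ ℓ := by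
  refine ⟨{p | co M p ∈ Submodule.span K {![0, 1, 0], ![0, 0, 1]}}, ⟨?_, ?_, ?_⟩, ?_⟩
  · rw [isFlat_iff N.hM]
    refine ⟨_, finrank_pair ?_, rfl⟩
    intro a b h
    exact ⟨by simpa using congrFun h 1, by simpa using congrFun h 2⟩
  · ext p
    simp only [lP, Set.mem_ofPred_eq, Set.mem_inter_iff, Submodule.mem_span_pair]
    refine and_congr_right fun _ => ?_
    constructor
    · intro h
      refine ⟨co M p 1, co M p 2, ?_⟩
      ext i
      fin_cases i <;> simp [h]
    · rintro ⟨a, b, h⟩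
      rw [← h]; simp
  · rw [← hq]
    apply card_line N.hM ![0, 1, 0] ![0, 0, 1]
    · intro a b h
      exact ⟨by simpa [algVec] using congrFun h 1, by simpa [algVec] using congrFun h 2⟩
    · intro p
      simp only [lP, Set.mem_ofPred_eq, N.hB]
      constructor
      · rintro ⟨⟨u, c, hc, h⟩, h0⟩
        refine ⟨u 1, u 2, c, hc, ?_⟩
        rw [h] at h0 ⊢
        have h0' : u 0 = 0 := by simpa [algVec, hc] using h0
        congr 2
        ext i
        fin_cases i <;> simp [h0']
      · rintro ⟨α, β, c, hc, h⟩
        refine ⟨⟨_, c, hc, h⟩, ?_⟩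
        rw [h]; simp [algVec]
  · obtain ⟨cP, hcP, hP⟩ := N.hP
    rw [Set.mem_ofPred_eq]
    rw [hP, Submodule.mem_span_pair]
    refine ⟨-cP * τ, cP, ?_⟩
    ext i
    fin_cases i <;> simp

lemma Nrm.lT_line {F : Type} [Field F] [Fintype F] [Algebra F K] {τ : K}
    {M : Matrix (Fin 3) (Fin 3) K} {B : Set (PP K 3)} {T P : PP K 3}
    (N : Nrm F τ M B T P) {q : ℕ} (hq : Fintype.card F = q) (x y : F) (hxy : x ≠ 0 ∨ y ≠ 0) :
    IsLineOf q B (lT F M B x y) ∧ T ∈ lT F M B x y := by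
  set X := algebraMap F K x with hX
  set Y := algebraMap F K y with hY
  have hXY : X ≠ 0 ∨ Y ≠ 0 := by simpa [hX, hY] using hxy
  refine ⟨⟨{p | co M p ∈ Submodule.span K {![1, 0, 0], ![0, X, Y]}}, ?_, ?_, ?_⟩, ?_, ?_⟩
  · rw [isFlat_iff N.hM]
    refine ⟨_, finrank_pair ?_, rfl⟩
    intro a b h
    refine ⟨by simpa using congrFun h 0, ?_⟩
    have h1 := congrFun h 1
    have h2 := congrFun h 2
    simp at h1 h2
    tauto
  · ext p
    simp only [lT, Set.mem_ofPred_eq, Set.mem_inter_iff, Submodule.mem_span_pair, ← hX, ← hY]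
    refine and_congr_right fun _ => ?_
    constructor
    · intro h
      rcases hXY with h0 | h0
      · refine ⟨co M p 0, co M p 1 / X, ?_⟩
        ext i
        fin_cases i <;> simp [h0]
        field_simp
        linear_combination h
      · refine ⟨co M p 0, co M p 2 / Y, ?_⟩
        ext i
        fin_cases i <;> simp [h0]
        field_simp
        linear_combination -h
    · rintro ⟨a, b, h⟩
      rw [← h]; simp; ring
  · rw [← hq]
    apply card_line N.hM ![1, 0, 0] ![0, x, y]
    · intro a b h
      refine ⟨by simpa [algVec] using congrFun h 0, ?_⟩
      have h1 := congrFun h 1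
      have h2 := congrFun h 2
      simp [algVec] at h1 h2
      tauto
    · intro p
      simp only [lT, Set.mem_ofPred_eq, N.hB]
      constructor
      · rintro ⟨⟨u, c, hc, h⟩, h0⟩
        rw [h] at h0
        have h0' : u 1 * y = u 2 * x := by
          apply (algebraMap F K).injective
          apply mul_left_cancel₀ hc
          simp only [algVec, Pi.smul_apply, smul_eq_mul] at h0
          simp only [map_mul]
          linear_combination h0
        rcases hxy with h1 | h1
        · refine ⟨u 0, u 1 / x, c, hc, ?_⟩
          rw [h]
          congr 2
          ext i
          fin_cases i <;> simp [h1]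
          field_simp
          linear_combination -h0'
        · refine ⟨u 0, u 2 / y, c, hc, ?_⟩
          rw [h]
          congr 2
          ext i
          fin_cases i <;> simp [h1]
          field_simp
          linear_combination h0'
      · rintro ⟨α, β, c, hc, h⟩
        refine ⟨⟨_, c, hc, h⟩, ?_⟩
        rw [h]; simp [algVec]; ring
  · obtain ⟨cT, hcT, hT⟩ := N.hT
    rw [N.hB]
    refine ⟨![1, 0, 0], cT, hcT, ?_⟩
    rw [hT]
    congr 1
    ext i
    fin_cases i <;> simp [algVec]
  · obtain ⟨cT, hcT, hT⟩ := N.hT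
    rw [hT]; simp

lemma span_eq {W : Submodule K (Fin 3 → K)} (hW : Module.finrank K W = 1 + 1)
    {v w : Fin 3 → K} (hv : v ∈ W) (hw : w ∈ W)
    (h : ∀ a b : K, a • v + b • w = 0 → a = 0 ∧ b = 0) : Submodule.span K {v, w} = W := by
  apply Submodule.eq_of_le_of_finrank_eq
  · rw [Submodule.span_le]
    rintro z (rfl | rfl)
    · exact hv
    · exact hw
  · rw [finrank_pair h, hW]

lemma Nrm.T_ne {F : Type} [Field F] [Algebra F K] {τ : K}
    {M : Matrix (Fin 3) (Fin 3) K} {B : Set (PP K 3)} {T P : PP K 3}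
    (N : Nrm F τ M B T P) {p : PP K 3} {u : Fin 3 → F} {c : K}
    (h : co M p = c • algVec F u) (hp : p ≠ T) : u 1 ≠ 0 ∨ u 2 ≠ 0 := by
  by_contra hcon
  push Not at hcon
  obtain ⟨cT, hcT, hT⟩ := N.hT
  apply hp
  refine co_inj N.hM (c := c * algebraMap F K (u 0)) ?_ hT
  rw [h]
  ext i
  fin_cases i <;> simp [algVec, hcon.1, hcon.2]

lemma Nrm.lT_of_line {F : Type} [Field F] [Fintype F] [Algebra F K] {τ : K}
    {M : Matrix (Fin 3) (Fin 3) K} {B : Set (PP K 3)} {T P : PP K 3}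
    (N : Nrm F τ M B T P) {q : ℕ} (hq : Fintype.card F = q) {m : Set (PP K 3)}
    (hm : IsLineOf q B m) (hTm : T ∈ m) :
    ∃ x y : F, (x ≠ 0 ∨ y ≠ 0) ∧ m = lT F M B x y := by
  obtain ⟨ℓ, hℓ, rfl, hcard⟩ := hm
  have hq1 : 1 < q := by rw [← hq]; exact Fintype.one_lt_card
  obtain ⟨Q, ⟨hQB, hQℓ⟩, hQT⟩ := Set.exists_ne_of_one_lt_ncard (by omega : 1 < (B ∩ ℓ).ncard) T
  obtain ⟨u, c, hc, hu⟩ := (N.hB Q).1 hQB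
  have hu0 := N.T_ne hu hQT
  obtain ⟨W, hW, rfl⟩ := (isFlat_iff N.hM _ _).1 hℓ
  obtain ⟨cT, hcT, hT⟩ := N.hT
  have hTW : ![1, 0, 0] ∈ W := by
    have h : co M T ∈ W := hTm.2
    rw [hT] at h
    exact (W.smul_mem_iff hcT).1 h
  have hQW : algVec F u ∈ W := by
    have h : co M Q ∈ W := hQℓ
    rw [hu] at h
    exact (W.smul_mem_iff hc).1 h
  have hind : ∀ a b : K, a • (![1, 0, 0] : Fin 3 → K) + b • algVec F u = 0 → a = 0 ∧ b = 0 := by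
    intro a b h
    have h0 := congrFun h 0
    have h1 := congrFun h 1
    have h2 := congrFun h 2
    simp [algVec] at h0 h1 h2
    have hb : b = 0 := by tauto
    rw [hb] at h0
    exact ⟨by simpa using h0, hb⟩
  have hs := span_eq hW hTW hQW hind
  refine ⟨u 1, u 2, hu0, ?_⟩
  ext p
  simp only [lT, Set.mem_ofPred_eq, Set.mem_inter_iff]
  refine and_congr_right fun _ => ?_
  rw [← hs, Submodule.mem_span_pair]
  constructor
  · rintro ⟨a, b, h⟩
    rw [← h]; simp [algVec]; ring
  · intro h
    have key : ∀ b : K, co M p 1 = b * algebraMap F K (u 1) → co M p 2 = b * algebraMap F K (u 2) →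
        ∃ a b : K, a • (![1, 0, 0] : Fin 3 → K) + b • algVec F u = co M p := by
      intro b h1 h2
      refine ⟨co M p 0 - b * algebraMap F K (u 0), b, ?_⟩
      ext i
      fin_cases i <;> simp [algVec, h1, h2]
    rcases hu0 with h0 | h0
    · have h0' : algebraMap F K (u 1) ≠ 0 := by simpa using h0
      refine key (co M p 1 / algebraMap F K (u 1)) (by field_simp) ?_
      field_simp
      linear_combination -h
    · have h0' : algebraMap F K (u 2) ≠ 0 := by simpa using h0
      refine key (co M p 2 / algebraMap F K (u 2)) ?_ (by field_simp)
      field_simp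
      linear_combination h

lemma Nrm.lP_uniq {F : Type} [Field F] [Fintype F] [Algebra F K] {τ : K}
    {M : Matrix (Fin 3) (Fin 3) K} {B : Set (PP K 3)} {T P : PP K 3}
    (N : Nrm F τ M B T P) (hτF : τ ∉ Set.range (algebraMap F K))
    {q : ℕ} (hq : Fintype.card F = q) {m ℓ : Set (PP K 3)}
    (hm : IsLineOfExt q B m ℓ) (hPℓ : P ∈ ℓ) {p : PP K 3} {c : K} (hc : c ≠ 0)
    (hp : co M p = c • ![0, 1, 0]) : p ∈ m := by
  obtain ⟨hℓ, rfl, hcard⟩ := hm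
  have hq1 : 1 < q := by rw [← hq]; exact Fintype.one_lt_card
  have hpB : p ∈ B := by
    rw [N.hB]
    refine ⟨![0, 1, 0], c, hc, ?_⟩
    rw [hp]
    congr 1
    ext i
    fin_cases i <;> simp [algVec]
  obtain ⟨Q0, hQ0⟩ : (B ∩ ℓ).Nonempty := by
    apply Set.nonempty_of_ncard_ne_zero; omega
  obtain ⟨Q, ⟨hQB, hQℓ⟩, hQQ⟩ := Set.exists_ne_of_one_lt_ncard (by omega : 1 < (B ∩ ℓ).ncard) Q0
  obtain ⟨hQ0B, hQ0ℓ⟩ := hQ0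
  obtain ⟨u, k, hk, hu⟩ := (N.hB Q).1 hQB
  obtain ⟨u', k', hk', hu'⟩ := (N.hB Q0).1 hQ0B
  obtain ⟨W, hW, rfl⟩ := (isFlat_iff N.hM _ _).1 hℓ
  obtain ⟨cP, hcP, hP⟩ := N.hP
  have hPW : ![0, -τ, 1] ∈ W := by
    have h : co M P ∈ W := hPℓ
    rw [hP] at h
    exact (W.smul_mem_iff hcP).1 h
  have hQW : algVec F u ∈ W := by
    have h : co M Q ∈ W := hQℓ
    rw [hu] at h
    exact (W.smul_mem_iff hk).1 h
  have hQW' : algVec F u' ∈ W := by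
    have h : co M Q0 ∈ W := hQ0ℓ
    rw [hu'] at h
    exact (W.smul_mem_iff hk').1 h
  have hnz : ∀ {u : Fin 3 → F} {k : K} {Q : PP K 3}, co M Q = k • algVec F u → u 0 = 0 →
      algebraMap F K (u 1) + τ * algebraMap F K (u 2) ≠ 0 := by
    intro u k Q hu h0 h
    obtain ⟨h1, h2⟩ := coord_zero hτF h
    apply co_ne N.hM Q
    rw [hu]
    ext i
    fin_cases i <;> simp [algVec, h0, h1, h2]
  -- it suffices to have a point of B ∩ ℓ with first coordinate zero
  have fin : u 0 = 0 → p ∈ B ∩ {p | co M p ∈ W} := by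
    intro h0
    refine ⟨hpB, ?_⟩
    show co M p ∈ W
    rw [hp]
    refine W.smul_mem _ ?_
    have hn := hnz hu h0
    have : (algebraMap F K (u 1) + τ * algebraMap F K (u 2)) • (![0, 1, 0] : Fin 3 → K) =
        algVec F u - algebraMap F K (u 2) • (![0, -τ, 1] : Fin 3 → K) := by
      ext i
      rw [Pi.sub_apply, Pi.smul_apply, Pi.smul_apply]
      fin_cases i
      · simp [algVec, h0]
      · simp [algVec]
        ring
      · simp [algVec]
    refine (W.smul_mem_iff hn).1 ?_
    rw [this]
    exact W.sub_mem hQW (W.smul_mem _ hPW)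
  by_contra hcon
  have hu0 : u 0 ≠ 0 := fun h => hcon (fin h)
  have hu0' : algebraMap F K (u 0) ≠ 0 := by simpa using hu0
  have hind : ∀ a b : K, a • ![0, -τ, 1] + b • algVec F u = 0 → a = 0 ∧ b = 0 := by
    intro a b h
    have h0 := congrFun h 0
    have h2 := congrFun h 2
    simp [algVec] at h0 h2
    have hb : b = 0 := by tauto
    rw [hb] at h2
    exact ⟨by simpa using h2, hb⟩
  rw [← span_eq hW hPW hQW hind, Submodule.mem_span_pair] at hQW'
  obtain ⟨a, b, hab⟩ := hQW'
  have h0 := congrFun hab 0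
  have h1 := congrFun hab 1
  have h2 := congrFun hab 2
  simp [algVec] at h0 h1 h2
  have hb : b = algebraMap F K (u' 0 / u 0) := by
    rw [map_div₀, eq_div_iff hu0', h0]
  set β := u' 0 / u 0
  have h3 : algebraMap F K (u' 1 - β * u 1) + τ * algebraMap F K (u' 2 - β * u 2) = 0 := by
    simp only [map_sub, map_mul, ← hb]
    linear_combination -h1 - τ * h2
  obtain ⟨h4, h5⟩ := coord_zero hτF h3
  apply hQQ
  refine (co_inj N.hM (c := k' * algebraMap F K β) ?_ hu).symm
  rw [hu']
  ext i
  fin_cases i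
  · simp [algVec]
    rw [← h0, hb]; ring
  · simp [algVec]
    rw [sub_eq_zero.1 h4, map_mul]; ring
  · simp [algVec]
    rw [sub_eq_zero.1 h5, map_mul]; ring

lemma coord_eq {F : Type} [Field F] [Algebra F K] {τ : K}
    (hτF : τ ∉ Set.range (algebraMap F K)) {x y x' y' : F}
    (h : algebraMap F K x + algebraMap F K y * τ = algebraMap F K x' + algebraMap F K y' * τ) :
    x = x' ∧ y = y' := by
  have := coord_zero hτF (x := x - x') (y := y - y')
    (by simp only [map_sub]; linear_combination h)
  exact ⟨sub_eq_zero.1 this.1, sub_eq_zero.1 this.2⟩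

lemma AffL.lin {F : Type} [Field F] [Algebra F K] {A : Set K} (hA : AffL F A) (h0 : 0 ∈ A) :
    ∃ a : K, a ≠ 0 ∧ A = {x | ∃ θ : F, x = algebraMap F K θ * a} := by
  obtain ⟨a, b, ha, rfl⟩ := hA
  obtain ⟨θ0, h⟩ := h0
  refine ⟨a, ha, ?_⟩
  ext x
  constructor
  · rintro ⟨θ, rfl⟩
    refine ⟨θ - θ0, ?_⟩
    simp only [map_sub]
    linear_combination -h
  · rintro ⟨θ, rfl⟩
    refine ⟨θ + θ0, ?_⟩
    simp only [map_add]
    linear_combination h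

lemma linL {F : Type} [Field F] [Algebra F K] {a : K} (ha : a ≠ 0) :
    AffL F {x : K | ∃ θ : F, x = algebraMap F K θ * a} :=
  ⟨a, 0, ha, by simp⟩

lemma norm_ne {F : Type} [Field F] [Algebra F K] {τ : K} {t0 t1 : F}
    (hτ : τ ^ 2 = algebraMap F K t1 * τ + algebraMap F K t0)
    (hτF : τ ∉ Set.range (algebraMap F K)) {u v : F}
    (h : algebraMap F K u + algebraMap F K v * τ ≠ 0) : u ^ 2 + u * v * t1 - v ^ 2 * t0 ≠ 0 := by
  intro h0
  have h1 : (algebraMap F K u + algebraMap F K v * τ) *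
      (algebraMap F K (u + v * t1) + τ * algebraMap F K (-v)) = 0 := by
    have := congrArg (algebraMap F K) h0
    simp only [map_add, map_sub, map_mul, map_pow, map_zero, map_neg] at this ⊢
    linear_combination this - (algebraMap F K v) ^ 2 * hτ
  rcases mul_eq_zero.1 h1 with h2 | h2
  · exact h h2
  · obtain ⟨h3, h4⟩ := coord_zero hτF h2
    have hv : v = 0 := by simpa using h4
    have hu : u = 0 := by simpa [hv] using h3
    apply h; simp [hu, hv]

lemma Nrm.T_mem {F : Type} [Field F] [Algebra F K] {τ : K}
    {M : Matrix (Fin 3) (Fin 3) K} {B : Set (PP K 3)} {T P : PP K 3}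
    (N : Nrm F τ M B T P) (A : Set K) : T ∈ pen M A ∩ B := by
  obtain ⟨cT, hcT, hT⟩ := N.hT
  constructor
  · rw [N.mem_pen hcT hT]
    left; simp
  · rw [N.hB]
    refine ⟨![1, 0, 0], cT, hcT, ?_⟩
    rw [hT]
    congr 1
    ext i
    fin_cases i <;> simp [algVec]

lemma Nrm.mem_mimg0 {F : Type} [Field F] [Algebra F K] {τ : K}
    {M : Matrix (Fin 3) (Fin 3) K} {B : Set (PP K 3)} {T P : PP K 3}
    (N : Nrm F τ M B T P) (E : Matrix (Fin 3) (Fin 3) K) {X : Set (Fin 3 → K)} {p : PP K 3}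
    {v : Fin 3 → K} (hv : v ∈ X) {c : K} (h : co M p = c • (E *ᵥ v)) : p ∈ mimg (M * E) X := by
  rw [mem_mimg N.hM]
  refine ⟨v, hv, c, ?_, h⟩
  rintro rfl
  exact co_ne N.hM p (by simpa using h)

lemma Nrm.conic {F : Type} [Field F] [Algebra F K] {τ : K} {t0 t1 : F}
    {M : Matrix (Fin 3) (Fin 3) K} {B : Set (PP K 3)} {T P : PP K 3}
    (N : Nrm F τ M B T P) (hτ : τ ^ 2 = algebraMap F K t1 * τ + algebraMap F K t0)
    (hτF : τ ∉ Set.range (algebraMap F K))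
    (c0 c1 : K → F)
    (hc : ∀ x : K, x = algebraMap F K (c0 x) + algebraMap F K (c1 x) * τ)
    {A : Set K} (hA : AffL F A) (h0 : (0 : K) ∉ A) : IsFqConic F (pen M A ∩ B) := by
  obtain ⟨a, b, ha, rfl⟩ := hA
  obtain ⟨a0, a1, rfl⟩ : ∃ a0 a1 : F, a = algebraMap F K a0 + algebraMap F K a1 * τ :=
    ⟨_, _, hc a⟩
  obtain ⟨b0, b1, rfl⟩ : ∃ a0 a1 : F, b = algebraMap F K a0 + algebraMap F K a1 * τ :=
    ⟨_, _, hc b⟩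
  have hna := norm_ne hτ hτF ha
  have hdet : a0 * b1 - a1 * b0 ≠ 0 := by
    intro h
    apply h0
    by_cases h1 : a0 = 0
    · have h2 : a1 ≠ 0 := by
        rintro rfl
        apply ha; simp [h1]
      have hb0 : b0 = 0 := by
        rw [h1] at h; simpa [h2] using h
      refine ⟨-b1 / a1, ?_⟩
      have h2' : algebraMap F K a1 ≠ 0 := by simpa using h2
      simp [h1, hb0]
      field_simp
      ring
    · have h2' : algebraMap F K a0 ≠ 0 := by simpa using h1
      refine ⟨-b0 / a0, ?_⟩
      have h' := congrArg (algebraMap F K) h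
      simp at h'
      simp
      field_simp
      linear_combination -τ * h'
  set E : Matrix (Fin 3) (Fin 3) F :=
    !![b0 ^ 2 + b0 * b1 * t1 - b1 ^ 2 * t0,
        2 * a0 * b0 + (a0 * b1 + a1 * b0) * t1 - 2 * a1 * b1 * t0,
        a0 ^ 2 + a0 * a1 * t1 - a1 ^ 2 * t0;
      b0 + b1 * t1, a0 + a1 * t1, 0;
      -b1, -a1, 0] with hE
  have hEd : IsUnit E.det := by
    rw [isUnit_iff_ne_zero, hE, Matrix.det_fin_three]
    simp
    have := mul_ne_zero hna hdet
    intro h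
    apply this
    linear_combination h
  have hEθ : ∀ θ : F, (E.map (algebraMap F K)) *ᵥ
      ![1, algebraMap F K θ, (algebraMap F K θ) ^ 2] = algVec F
      ![(b0 + θ * a0) ^ 2 + (b0 + θ * a0) * (b1 + θ * a1) * t1 - (b1 + θ * a1) ^ 2 * t0,
        (b0 + θ * a0) + (b1 + θ * a1) * t1, -(b1 + θ * a1)] := by
    intro θ
    have : (![1, algebraMap F K θ, (algebraMap F K θ) ^ 2] : Fin 3 → K) =
        algVec F ![1, θ, θ ^ 2] := by
      ext i; fin_cases i <;> simp [algVec]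
    rw [this, algVec_mul]
    congr 1
    ext i
    fin_cases i <;> simp [hE, Matrix.mulVec, dotProduct, Fin.sum_univ_three] <;> ring
  have hEi : (E.map (algebraMap F K)) *ᵥ ![0, 0, 1] = algVec F
      ![a0 ^ 2 + a0 * a1 * t1 - a1 ^ 2 * t0, 0, 0] := by
    have : (![0, 0, 1] : Fin 3 → K) = algVec F ![0, 0, 1] := by
      ext i; fin_cases i <;> simp [algVec]
    rw [this, algVec_mul]
    congr 1
    ext i
    fin_cases i <;> simp [hE, Matrix.mulVec, dotProduct, Fin.sum_univ_three]
  refine ⟨M * E.map (algebraMap F K), ?_, ?_⟩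
  · rw [Matrix.det_mul]
    refine N.hM.mul ?_
    have := RingHom.map_det (algebraMap F K) E
    rw [RingHom.mapMatrix_apply] at this
    rw [← this]
    exact hEd.map _
  ext p
  constructor
  · rintro ⟨hp, hpB⟩
    obtain ⟨w, c, hc', hw⟩ := (N.hB p).1 hpB
    rw [N.mem_pen hc' hw] at hp
    by_cases hz : (algVec F w 1 : K) + τ * algVec F w 2 = 0
    · obtain ⟨h1, h2⟩ := coord_zero hτF hz
      refine N.mem_mimg0 _ (v := ![0, 0, 1]) (Or.inr rfl)
        (c := c * algebraMap F K (w 0 / (a0 ^ 2 + a0 * a1 * t1 - a1 ^ 2 * t0))) ?_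
      rw [hEi, hw, mul_smul]
      congr 1
      ext i
      rw [Pi.smul_apply, smul_eq_mul]
      simp only [algVec]
      rw [← map_mul]
      congr 1
      fin_cases i
      · simp [hna]
      · simp [h1]
      · simp [h2]
    · rcases hp with hp | ⟨θ, hp⟩
      · exact absurd hp hz
      have hp2 := hp
      rw [div_eq_iff hz] at hp
      set u := b0 + θ * a0 with hu
      set v := b1 + θ * a1 with hv
      have hα : algebraMap F K b0 + algebraMap F K b1 * τ + algebraMap F K θ *
          (algebraMap F K a0 + algebraMap F K a1 * τ) =
          algebraMap F K u + algebraMap F K v * τ := by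
        rw [hu, hv]; simp only [map_add, map_mul]; ring
      rw [hα] at hp
      have hα0 : algebraMap F K u + algebraMap F K v * τ ≠ 0 := by
        intro h
        apply h0
        exact ⟨θ, by rw [hα, h]⟩
      have hn := norm_ne hτ hτF hα0
      have hcz := coord_zero hτF (x := u * w 1 + v * w 2 * t0 - w 0)
        (y := u * w 2 + v * w 1 + v * w 2 * t1) (by
          simp only [algVec] at hp
          simp only [map_add, map_sub, map_mul]
          linear_combination -hp - algebraMap F K v * algebraMap F K (w 2) * hτ)
      obtain ⟨e1, e2⟩ := hcz
      refine N.mem_mimg0 _ (v := ![1, algebraMap F K θ, (algebraMap F K θ) ^ 2])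
        (Or.inl ⟨_, ⟨θ, rfl⟩, rfl⟩)
        (c := c * algebraMap F K (w 0 / (u ^ 2 + u * v * t1 - v ^ 2 * t0))) ?_
      rw [hEθ, hw, mul_smul, ← hu, ← hv]
      congr 1
      ext i
      rw [Pi.smul_apply, smul_eq_mul]
      simp only [algVec]
      rw [← map_mul]
      congr 1
      rw [div_mul_eq_mul_div, eq_div_iff hn]
      fin_cases i
      · simp
      · simp
        linear_combination (u + v * t1) * e1 - v * t0 * e2
      · simp
        linear_combination u * e2 - v * e1
  · intro hp
    rw [mem_mimg N.hM] at hp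
    obtain ⟨v, hv, c, hc', h⟩ := hp
    rcases hv with ⟨_, ⟨θ, rfl⟩, rfl⟩ | rfl
    · rw [hEθ] at h
      refine ⟨?_, (N.hB p).2 ⟨_, c, hc', h⟩⟩
      rw [N.mem_pen hc' h]
      by_cases hz : (algVec F ![(b0 + θ * a0) ^ 2 + (b0 + θ * a0) * (b1 + θ * a1) * t1
        - (b1 + θ * a1) ^ 2 * t0,
        (b0 + θ * a0) + (b1 + θ * a1) * t1, -(b1 + θ * a1)] 1 : K) + τ * algVec F
        ![(b0 + θ * a0) ^ 2 + (b0 + θ * a0) * (b1 + θ * a1) * t1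
        - (b1 + θ * a1) ^ 2 * t0,
        (b0 + θ * a0) + (b1 + θ * a1) * t1, -(b1 + θ * a1)] 2 = 0
      · exact Or.inl hz
      · right
        refine ⟨θ, ?_⟩
        rw [div_eq_iff hz]
        simp only [algVec, Matrix.cons_val, map_add, map_sub, map_mul, map_pow, map_neg]
        linear_combination (algebraMap F K b1 + algebraMap F K θ * algebraMap F K a1) ^ 2 * hτ
    · rw [hEi] at h
      refine ⟨?_, (N.hB p).2 ⟨_, c, hc', h⟩⟩
      rw [N.mem_pen hc' h]
      left
      simp [algVec]

lemma Nrm.lines {F : Type} [Field F] [Algebra F K] {τ : K}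
    {M : Matrix (Fin 3) (Fin 3) K} {B : Set (PP K 3)} {T P : PP K 3}
    (N : Nrm F τ M B T P) (hτF : τ ∉ Set.range (algebraMap F K)) (x y : F) (a : K)
    (ha : a ≠ 0) (hxy : (algebraMap F K x + algebraMap F K y * τ) * a = 1) :
    pen M {α | ∃ θ : F, α = algebraMap F K θ * a} ∩ B = lP M B ∪ lT F M B x y := by
  have hxy0 : x ≠ 0 ∨ y ≠ 0 := by
    by_contra hcon
    push Not at hcon
    simp [hcon.1, hcon.2] at hxy
  ext p
  by_cases hpB : p ∈ B
  swap
  · simp [lP, lT, hpB]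
  simp only [Set.mem_inter_iff, hpB, and_true, Set.mem_union, lP, lT, Set.mem_ofPred_eq, true_and]
  obtain ⟨w, c, hc, hw⟩ := (N.hB p).1 hpB
  rw [N.mem_pen hc hw, hw]
  have e0 : (c • algVec F w : Fin 3 → K) 0 = 0 ↔ w 0 = 0 := by simp [algVec, hc]
  have e1 : (c • algVec F w : Fin 3 → K) 1 * algebraMap F K y =
      (c • algVec F w : Fin 3 → K) 2 * algebraMap F K x ↔ w 1 * y = w 2 * x := by
    rw [← (algebraMap F K).injective.eq_iff, map_mul, map_mul]
    simp only [algVec, Pi.smul_apply, smul_eq_mul, mul_assoc]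
    exact mul_right_inj' hc
  rw [e0, e1]
  by_cases hz : (algVec F w 1 : K) + τ * algVec F w 2 = 0
  · obtain ⟨h1, h2⟩ := coord_zero hτF hz
    simp [hz, h1, h2]
  simp only [hz, false_or, Set.mem_ofPred_eq]
  constructor
  · rintro ⟨θ, h⟩
    by_cases hθ : θ = 0
    · left
      have h' : w 0 = 0 ∨ algebraMap F K (w 1) + τ * algebraMap F K (w 2) = 0 := by
        simpa [hθ, algVec] using h
      exact h'.resolve_right hz
    · right
      have hθ' : algebraMap F K θ ≠ 0 := by simpa using hθ
      rw [div_eq_iff hz] at h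
      obtain ⟨h1, h2⟩ := coord_zero hτF (x := θ * w 1 - w 0 * x) (y := θ * w 2 - w 0 * y) (by
        simp only [algVec] at h
        simp only [map_sub, map_mul]
        linear_combination (-(algebraMap F K x + algebraMap F K y * τ)) * h -
          algebraMap F K θ * (algebraMap F K (w 1) + τ * algebraMap F K (w 2)) * hxy)
      apply mul_left_cancel₀ hθ
      linear_combination y * h1 - x * h2
  · rintro (h | h)
    · exact ⟨0, by simp [h, algVec]⟩
    · obtain ⟨k, h1, h2⟩ : ∃ k : F, w 1 = k * x ∧ w 2 = k * y := by
        rcases hxy0 with h0 | h0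
        · refine ⟨w 1 / x, by field_simp, ?_⟩
          field_simp; linear_combination -h
        · refine ⟨w 2 / y, ?_, by field_simp⟩
          field_simp; linear_combination h
      have hk : k ≠ 0 := by
        rintro rfl
        apply hz; simp [algVec, h1, h2]
      have hk' : algebraMap F K k ≠ 0 := by simpa using hk
      refine ⟨w 0 / k, ?_⟩
      rw [div_eq_iff hz]
      simp only [algVec, h1, h2, map_mul, map_div₀]
      field_simp
      linear_combination (-algebraMap F K (w 0)) * hxy

lemma conic_card {F : Type} [Field F] [Fintype F] [Finite K] [Algebra F K] {C : Set (PP K 3)}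
    (hC : IsFqConic F C) (T : PP K 3) : C.ncard ≤ Fintype.card F + 1 := by
  obtain ⟨M, hM, rfl⟩ := hC
  let g : (Fin 3 → K) → PP K 3 := fun v =>
    if h : M *ᵥ v ≠ 0 then Projectivization.mk K _ h else T
  let f : Option F → (Fin 3 → K) := fun o =>
    o.elim ![0, 0, 1] (fun θ => ![1, algebraMap F K θ, (algebraMap F K θ) ^ 2])
  have hsub : mimg M (conicVecs (Set.range (algebraMap F K))) ⊆ (g ∘ f) '' Set.univ := by
    rintro p ⟨v, hv, h, rfl⟩
    have hg : g v = Projectivization.mk K _ h := by simp only [g]; rw [dif_pos h]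
    rcases hv with ⟨_, ⟨θ, rfl⟩, rfl⟩ | rfl
    · exact ⟨some θ, trivial, hg⟩
    · exact ⟨none, trivial, hg⟩
  have h1 := Set.ncard_le_ncard hsub (Set.toFinite _)
  have h2 := Set.ncard_image_le (f := g ∘ f) (s := Set.univ) (Set.toFinite _)
  rw [Set.ncard_univ, Nat.card_eq_fintype_card, Fintype.card_option] at h2
  omega

lemma Nrm.not_conic {F : Type} [Field F] [Fintype F] [Finite K] [Algebra F K] {τ : K}
    {M : Matrix (Fin 3) (Fin 3) K} {B : Set (PP K 3)} {T P : PP K 3}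
    (N : Nrm F τ M B T P) {A : Set K} (h0 : (0 : K) ∈ A) : ¬ IsFqConic F (pen M A ∩ B) := by
  intro h
  have h1 := conic_card h T
  obtain ⟨ℓ, hℓ, -⟩ := N.lP_line (q := Fintype.card F) rfl
  have h2 := hℓ.2.2
  have hT : T ∉ lP M B := by
    obtain ⟨cT, hcT, hT⟩ := N.hT
    rintro ⟨-, h⟩
    rw [hT] at h
    simp [hcT] at h
  have hfin : (lP M B).Finite := Set.finite_of_ncard_ne_zero (by omega)
  have h3 := Set.ncard_insert_of_notMem hT hfin
  have hfin2 : (pen M A ∩ B).Finite := by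
    have : Finite (PP K 3) := Quotient.finite _
    exact Set.toFinite _
  have h4 : (insert T (lP M B)).ncard ≤ (pen M A ∩ B).ncard := by
    apply Set.ncard_le_ncard _ hfin2
    rintro p (rfl | ⟨hp, hp0⟩)
    · exact N.T_mem A
    · refine ⟨?_, hp⟩
      right
      rw [hp0, zero_div]
      exact h0
  omega

lemma Nrm.zero_mem {F : Type} [Field F] [Fintype F] [Algebra F K] {τ : K}
    {M : Matrix (Fin 3) (Fin 3) K} {B : Set (PP K 3)} {T P : PP K 3}
    (N : Nrm F τ M B T P) (hτF : τ ∉ Set.range (algebraMap F K))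
    {q : ℕ} (hq : Fintype.card F = q) {A : Set K} {mP ℓP m : Set (PP K 3)}
    (h1 : IsLineOfExt q B mP ℓP) (h2 : P ∈ ℓP) (h : pen M A ∩ B = mP ∪ m) : (0 : K) ∈ A := by
  have hv : (![0, 1, 0] : Fin 3 → K) ≠ 0 := by
    intro h; simpa using congrFun h 1
  obtain ⟨p, c, hc, hp⟩ := exists_pt N.hM hv
  have hpm := N.lP_uniq hτF hq h1 h2 hc hp
  have : p ∈ pen M A ∩ B := by rw [h]; exact Or.inl hpm
  have := (N.mem_pen hc hp).1 this.1
  simpa using this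

lemma count0 {F : Type} [Field F] [Fintype F] [Algebra F K] {τ : K}
    (hτF : τ ∉ Set.range (algebraMap F K)) (c0 c1 : K → F)
    (hc : ∀ x : K, x = algebraMap F K (c0 x) + algebraMap F K (c1 x) * τ) :
    {A : Set K | AffL F A ∧ (0 : K) ∈ A}.ncard = Fintype.card F + 1 := by
  let d : Option F → K := fun o => o.elim 1 (fun t => algebraMap F K t + τ)
  have hd : ∀ o, d o ≠ 0 := by
    rintro (_ | t)
    · exact one_ne_zero
    · intro h
      have := coord_zero hτF (x := t) (y := 1) (by simpa [d] using h)
      exact one_ne_zero this.2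
  let g : Option F → Set K := fun o => {x | ∃ θ : F, x = algebraMap F K θ * d o}
  have hinj : Function.Injective g := by
    intro o o' h
    have h1 : d o ∈ g o' := by rw [← h]; exact ⟨1, by simp⟩
    obtain ⟨θ, hθ⟩ := h1
    rcases o with _ | t <;> rcases o' with _ | t'
    · rfl
    · exfalso
      simp only [d, Option.elim] at hθ
      have := coord_zero hτF (x := θ * t' - 1) (y := θ)
        (by simp only [map_sub, map_mul, map_one]; linear_combination -hθ)
      rw [this.2] at this
      simp at this
    · exfalso
      simp only [d, Option.elim] at hθ
      have := coord_zero hτF (x := t - θ) (y := 1)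
        (by simp only [map_sub, map_one]; linear_combination hθ)
      exact one_ne_zero this.2
    · simp only [d, Option.elim] at hθ
      have := coord_zero hτF (x := t - θ * t') (y := 1 - θ)
        (by simp only [map_sub, map_mul, map_one]; linear_combination hθ)
      congr 1
      linear_combination this.1 - t' * this.2
  have hr : {A : Set K | AffL F A ∧ (0 : K) ∈ A} = g '' Set.univ := by
    ext A
    constructor
    · rintro ⟨hA, h0⟩
      obtain ⟨a, ha, rfl⟩ := hA.lin h0
      have key : ∀ (o : Option F) (k : F), k ≠ 0 → a = algebraMap F K k * d o →
          {x | ∃ θ : F, x = algebraMap F K θ * a} ∈ g '' Set.univ := by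
        intro o k hk h
        have hk' : algebraMap F K k ≠ 0 := by simpa using hk
        refine ⟨o, trivial, ?_⟩
        ext x
        constructor
        · rintro ⟨θ, rfl⟩
          refine ⟨θ / k, ?_⟩
          rw [h, map_div₀]; field_simp
        · rintro ⟨θ, rfl⟩
          refine ⟨θ * k, ?_⟩
          rw [h, map_mul]; ring
      have hca := hc a
      by_cases h1 : c1 a = 0
      · rw [h1] at hca
        refine key none (c0 a) ?_ (by simpa [d] using hca)
        intro h
        apply ha; rw [hca, h]; simp
      · have h1' : algebraMap F K (c1 a) ≠ 0 := by simpa using h1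
        refine key (some (c0 a / c1 a)) (c1 a) h1 ?_
        simp only [d, Option.elim, map_div₀]
        field_simp
        linear_combination hca
    · rintro ⟨o, -, rfl⟩
      exact ⟨linL (hd o), 0, by simp⟩
  rw [hr, Set.ncard_image_of_injective _ hinj, Set.ncard_univ,
    Nat.card_eq_fintype_card, Fintype.card_option]

lemma count1 {F : Type} [Field F] [Fintype F] [Algebra F K] {τ : K}
    (hτF : τ ∉ Set.range (algebraMap F K)) (c0 c1 : K → F)
    (hc : ∀ x : K, x = algebraMap F K (c0 x) + algebraMap F K (c1 x) * τ) :
    {A : Set K | AffL F A ∧ (0 : K) ∉ A}.ncard = Fintype.card F ^ 2 - 1 := by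
  have hcc : ∀ u v : F, c0 (algebraMap F K u + algebraMap F K v * τ) = u ∧
      c1 (algebraMap F K u + algebraMap F K v * τ) = v := fun u v =>
    coord_eq hτF (hc _).symm
  have h00 := hcc 0 0
  simp only [map_zero, zero_mul, add_zero] at h00
  let g : F × F → Set K := fun s => {x | s.1 * c0 x + s.2 * c1 x = 1}
  have hinj : Set.InjOn g ({0}ᶜ : Set (F × F)) := by
    rintro ⟨s, t⟩ hs ⟨s', t'⟩ hs' h
    have key : ∀ u v : F, s * u + t * v = 1 → s' * u + t' * v = 1 := by
      intro u v huv
      have h1 : algebraMap F K u + algebraMap F K v * τ ∈ g (s, t) := by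
        show s * c0 _ + t * c1 _ = 1
        rw [(hcc u v).1, (hcc u v).2, huv]
      rw [h] at h1
      have h2 : s' * c0 _ + t' * c1 _ = 1 := h1
      rwa [(hcc u v).1, (hcc u v).2] at h2
    have hst : s ≠ 0 ∨ t ≠ 0 := by
      by_contra hcon
      push Not at hcon
      exact hs (by simp [hcon.1, hcon.2])
    rcases hst with h0 | h0
    · have h1 := key (1 / s) 0 (by field_simp; ring)
      have h2 := key ((1 - t) / s) 1 (by field_simp; ring)
      field_simp at h1 h2
      have e1 : s' = s := by linear_combination h1
      subst e1
      have e2 : t = t' := by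
        apply mul_left_cancel₀ h0
        first | linear_combination -h2 | linear_combination h2 |
          linear_combination -s' * h2 | linear_combination s' * h2
      rw [e2]
    · have h1 := key 0 (1 / t) (by field_simp; ring)
      have h2 := key 1 ((1 - s) / t) (by field_simp; ring)
      field_simp at h1 h2
      have e1 : t' = t := by linear_combination h1
      subst e1
      have e2 : s = s' := by
        apply mul_left_cancel₀ h0
        first | linear_combination -h2 | linear_combination h2 |
          linear_combination -t' * h2 | linear_combination t' * h2
      rw [e2]
  have hr : {A : Set K | AffL F A ∧ (0 : K) ∉ A} = g '' {0}ᶜ := by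
    ext A
    constructor
    · rintro ⟨⟨a, b, ha, rfl⟩, h0⟩
      obtain ⟨a0, a1, rfl⟩ : ∃ a0 a1 : F, a = algebraMap F K a0 + algebraMap F K a1 * τ :=
        ⟨_, _, hc a⟩
      obtain ⟨b0, b1, rfl⟩ : ∃ a0 a1 : F, b = algebraMap F K a0 + algebraMap F K a1 * τ :=
        ⟨_, _, hc b⟩
      have ha' : a0 ≠ 0 ∨ a1 ≠ 0 := by
        by_contra hcon
        push Not at hcon
        apply ha; simp [hcon.1, hcon.2]
      have hmem : ∀ u v : F, a1 * (u - b0) = a0 * (v - b1) → ∃ θ : F,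
          algebraMap F K u + algebraMap F K v * τ =
          algebraMap F K b0 + algebraMap F K b1 * τ +
          algebraMap F K θ * (algebraMap F K a0 + algebraMap F K a1 * τ) := by
        intro u v h
        have key : ∀ θ : F, u = b0 + θ * a0 → v = b1 + θ * a1 → ∃ θ : F,
          algebraMap F K u + algebraMap F K v * τ =
          algebraMap F K b0 + algebraMap F K b1 * τ +
          algebraMap F K θ * (algebraMap F K a0 + algebraMap F K a1 * τ) := by
          intro θ h1 h2
          refine ⟨θ, ?_⟩
          rw [h1, h2]; simp only [map_add, map_mul]; ring
        rcases ha' with h1 | h1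
        · refine key ((u - b0) / a0) (by field_simp; ring) ?_
          field_simp; linear_combination -h
        · refine key ((v - b1) / a1) ?_ (by field_simp; ring)
          field_simp; linear_combination h
      have hΔ : a1 * b0 - a0 * b1 ≠ 0 := by
        intro h
        apply h0
        obtain ⟨θ, hθ⟩ := hmem 0 0 (by linear_combination -h)
        exact ⟨θ, by simpa using hθ⟩
      refine ⟨(a1 / (a1 * b0 - a0 * b1), -a0 / (a1 * b0 - a0 * b1)), ?_, ?_⟩
      · intro h
        simp [hΔ] at h
        tauto
      · ext x
        have hx := hc x
        set u := c0 x with hu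
        set v := c1 x with hv
        have e : x ∈ g (a1 / (a1 * b0 - a0 * b1), -a0 / (a1 * b0 - a0 * b1)) ↔
            a1 / (a1 * b0 - a0 * b1) * u + -a0 / (a1 * b0 - a0 * b1) * v = 1 := Iff.rfl
        rw [e]
        constructor
        · intro h
          rw [Set.mem_ofPred_eq, hx]
          apply hmem
          field_simp at h
          linear_combination h
        · rintro ⟨θ, h⟩
          rw [hx] at h
          obtain ⟨h1, h2⟩ := coord_eq hτF (x := u) (y := v) (x' := b0 + θ * a0)
            (y' := b1 + θ * a1) (by rw [h]; simp only [map_add, map_mul]; ring)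
          rw [h1, h2]
          field_simp
          ring
    · rintro ⟨⟨s, t⟩, hs, rfl⟩
      have hst : s ≠ 0 ∨ t ≠ 0 := by
        by_contra hcon
        push Not at hcon
        exact hs (by simp [hcon.1, hcon.2])
      refine ⟨?_, ?_⟩
      swap
      · intro h
        have h : s * c0 0 + t * c1 0 = 1 := h
        rw [h00.1, h00.2] at h
        simp at h
      obtain ⟨b0, b1, hb⟩ : ∃ b0 b1 : F, s * b0 + t * b1 = 1 := by
        rcases hst with h | h
        · exact ⟨1 / s, 0, by field_simp; ring⟩
        · exact ⟨0, 1 / t, by field_simp; ring⟩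
      refine ⟨algebraMap F K (-t) + algebraMap F K s * τ,
        algebraMap F K b0 + algebraMap F K b1 * τ, ?_, ?_⟩
      · intro h
        obtain ⟨h1, h2⟩ := coord_zero hτF (x := -t) (y := s) (by linear_combination h)
        simp at h1
        tauto
      · ext x
        have hx := hc x
        set u := c0 x with hu
        set v := c1 x with hv
        have e : x ∈ g (s, t) ↔ s * u + t * v = 1 := Iff.rfl
        rw [e]
        constructor
        · intro h
          -- θ = b0 * v - b1 * u
          refine ⟨b0 * v - b1 * u, ?_⟩
          have h1 : u = b0 + (b0 * v - b1 * u) * (-t) := by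
            linear_combination -u * hb + b0 * h
          have h2 : v = b1 + (b0 * v - b1 * u) * s := by
            linear_combination -v * hb + b1 * h
          rw [hx]
          have h1' := congrArg (algebraMap F K) h1
          have h2' := congrArg (algebraMap F K) h2
          simp only [map_add, map_mul, map_sub, map_neg] at h1' h2' ⊢
          linear_combination h1' + τ * h2'
        · rintro ⟨θ, h⟩
          rw [hx] at h
          obtain ⟨h1, h2⟩ := coord_eq hτF (x := u) (y := v) (x' := b0 + θ * (-t))
            (y' := b1 + θ * s) (by rw [h]; simp only [map_add, map_mul]; ring)
          rw [h1, h2]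
          linear_combination hb
  rw [hr, Set.ncard_image_of_injOn hinj, Set.ncard_compl, Set.ncard_singleton,
    Nat.card_eq_fintype_card, Fintype.card_prod, sq]
/-- An `ℓ∞`-Baer pencil with vertex `P̄ ≠ T̄` meets a Baer subplane `B` tangent to `ℓ∞`
at `T̄` either in an `F_q`-conic through `T̄` or in two lines of `B`; there are `q²-1`
pencils of the first type and `q+1` of the second. -/
theorem statement_2
    {F K : Type} [Field F] [Field K] [Fintype F] [Fintype K] [Algebra F K]
    (q : ℕ) (hq : Fintype.card F = q) (hK : Fintype.card K = q ^ 2)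
    (τ : K) (t0 t1 : F)
    (hτ : τ ^ 2 = algebraMap F K t1 * τ + algebraMap F K t0)
    (hτF : τ ∉ Set.range (algebraMap F K))
    (c0 c1 : K → F)
    (hc : ∀ x : K, x = algebraMap F K (c0 x) + algebraMap F K (c1 x) * τ)
    (B : Set (PP K 3)) (hB : IsBaerSubplane F B)
    (T : PP K 3) (hT : B ∩ linf K = {T})
    (P : PP K 3) (hP : P ∈ linf K) (hPT : P ≠ T) :
    (∀ 𝒦 : Set (PP K 3), IsLinfBaerPencil F 𝒦 P →
      (∃ C : Set (PP K 3), IsFqConic F C ∧ C ⊆ B ∧ T ∈ C ∧ 𝒦 ∩ B = C) ∨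
      (∃ mP ℓP m : Set (PP K 3), IsLineOfExt q B mP ℓP ∧ P ∈ ℓP ∧
        IsLineOf q B m ∧ T ∈ m ∧ 𝒦 ∩ B = mP ∪ m)) ∧
    {𝒦 : Set (PP K 3) | IsLinfBaerPencil F 𝒦 P ∧
      ∃ C : Set (PP K 3), IsFqConic F C ∧ C ⊆ B ∧ T ∈ C ∧ 𝒦 ∩ B = C}.ncard = q ^ 2 - 1 ∧
    {𝒦 : Set (PP K 3) | IsLinfBaerPencil F 𝒦 P ∧
      ∃ mP ℓP m : Set (PP K 3), IsLineOfExt q B mP ℓP ∧ P ∈ ℓP ∧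
        IsLineOf q B m ∧ T ∈ m ∧ 𝒦 ∩ B = mP ∪ m}.ncard = q + 1 ∧
    (∀ m : Set (PP K 3), IsLineOf q B m → T ∈ m →
      ∃! 𝒦 : Set (PP K 3), IsLinfBaerPencil F 𝒦 P ∧
        ∃ mP ℓP : Set (PP K 3), IsLineOfExt q B mP ℓP ∧ P ∈ ℓP ∧ 𝒦 ∩ B = mP ∪ m) := by
  obtain ⟨M, N⟩ := exists_nrm q hq hK τ hτF c0 c1 hc B hB T hT P hP hPT
  obtain ⟨ℓ, hℓ, hPℓ⟩ := N.lP_line hq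
  have con : ∀ A, AffL F A → ((∃ C : Set (PP K 3), IsFqConic F C ∧ C ⊆ B ∧ T ∈ C ∧
      pen M A ∩ B = C) ↔ 0 ∉ A) := by
    intro A hA
    constructor
    · rintro ⟨C, hC, -, -, e⟩ h0
      rw [← e] at hC
      exact N.not_conic h0 hC
    · intro h0
      exact ⟨_, N.conic hτ hτF c0 c1 hc hA h0, Set.inter_subset_right, N.T_mem A, rfl⟩
  have lin : ∀ A, AffL F A → ((∃ mP ℓP m : Set (PP K 3), IsLineOfExt q B mP ℓP ∧ P ∈ ℓP ∧
        IsLineOf q B m ∧ T ∈ m ∧ pen M A ∩ B = mP ∪ m) ↔ 0 ∈ A) := by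
    intro A hA
    constructor
    · rintro ⟨mP, ℓP, m, h1, h2, -, -, e⟩
      exact N.zero_mem hτF hq h1 h2 e
    · intro h0
      obtain ⟨a, ha, rfl⟩ := hA.lin h0
      have hxy : (algebraMap F K (c0 a⁻¹) + algebraMap F K (c1 a⁻¹) * τ) * a = 1 := by
        rw [← hc, inv_mul_cancel₀ ha]
      have hxy0 : c0 a⁻¹ ≠ 0 ∨ c1 a⁻¹ ≠ 0 := by
        by_contra hcon
        push Not at hcon
        simp [hcon.1, hcon.2] at hxy
      obtain ⟨h1, h2⟩ := N.lT_line hq _ _ hxy0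
      exact ⟨_, ℓ, _, hℓ, hPℓ, h1, h2, N.lines hτF _ _ a ha hxy⟩
  refine ⟨?_, ?_, ?_, ?_⟩
  · intro 𝒦 h
    obtain ⟨A, hA, rfl⟩ := (N.pencil_iff 𝒦).1 h
    by_cases h0 : 0 ∈ A
    · exact Or.inr ((lin A hA).2 h0)
    · exact Or.inl ((con A hA).2 h0)
  · rw [← hq, ← count1 hτF c0 c1 hc, ← Set.ncard_image_of_injective _ N.pen_inj]
    congr 1
    ext 𝒦
    constructor
    · rintro ⟨h, h'⟩
      obtain ⟨A, hA, rfl⟩ := (N.pencil_iff 𝒦).1 h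
      exact ⟨A, ⟨hA, (con A hA).1 h'⟩, rfl⟩
    · rintro ⟨A, ⟨hA, h0⟩, rfl⟩
      exact ⟨(N.pencil_iff _).2 ⟨A, hA, rfl⟩, (con A hA).2 h0⟩
  · have cc := count0 hτF c0 c1 hc
    rw [hq] at cc
    rw [← cc, ← Set.ncard_image_of_injective _ N.pen_inj]
    congr 1
    ext 𝒦
    constructor
    · rintro ⟨h, h'⟩
      obtain ⟨A, hA, rfl⟩ := (N.pencil_iff 𝒦).1 h
      exact ⟨A, ⟨hA, (lin A hA).1 h'⟩, rfl⟩
    · rintro ⟨A, ⟨hA, h0⟩, rfl⟩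
      exact ⟨(N.pencil_iff _).2 ⟨A, hA, rfl⟩, (lin A hA).2 h0⟩
  · intro m hm hTm
    obtain ⟨x, y, hxy, rfl⟩ := N.lT_of_line hq hm hTm
    have hz : algebraMap F K x + τ * algebraMap F K y ≠ 0 := by
      intro h
      obtain ⟨h1, h2⟩ := coord_zero hτF h
      simp [h1, h2] at hxy
    have ha := inv_ne_zero hz
    refine ⟨pen M {α | ∃ θ : F, α = algebraMap F K θ *
      (algebraMap F K x + τ * algebraMap F K y)⁻¹},
      ⟨(N.pencil_iff _).2 ⟨_, linL ha, rfl⟩, _, ℓ, hℓ, hPℓ, N.lines hτF x y _ ha ?_⟩, ?_⟩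
    · rw [mul_comm (algebraMap F K y), mul_inv_cancel₀ hz]
    · rintro 𝒦 ⟨h, mP, ℓP, h1, h2, e⟩
      obtain ⟨A, hA, rfl⟩ := (N.pencil_iff 𝒦).1 h
      obtain ⟨a, ha', rfl⟩ := hA.lin (N.zero_mem hτF hq h1 h2 e)
      have hv : (algVec F ![1, x, y] : Fin 3 → K) ≠ 0 := by
        intro h
        have := congrFun h 0
        simp [algVec] at this
      obtain ⟨p, c, hcc, hp⟩ := exists_pt N.hM hv
      have hpB : p ∈ B := (N.hB p).2 ⟨_, c, hcc, hp⟩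
      have hpm : p ∈ lT F M B x y := by
        refine ⟨hpB, ?_⟩
        rw [hp]
        simp [algVec]
        ring
      have hpK := (Set.ext_iff.1 e p).2 (Or.inr hpm)
      have hpK' := (N.mem_pen hcc hp).1 hpK.1
      have hz' : (algVec F ![1, x, y] 1 : K) + τ * algVec F ![1, x, y] 2 ≠ 0 := by
        simpa [algVec] using hz
      obtain ⟨θ, hθ⟩ := hpK'.resolve_left hz'
      have hθ' : (algebraMap F K x + τ * algebraMap F K y)⁻¹ = algebraMap F K θ * a := by
        simpa [algVec] using hθ
      have hθ0 : algebraMap F K θ ≠ 0 := by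
        intro h
        rw [h, zero_mul] at hθ'
        exact ha hθ'
      rw [hθ']
      congr 1
      ext α
      constructor
      · rintro ⟨s, rfl⟩
        refine ⟨s * θ⁻¹, ?_⟩
        rw [map_mul, map_inv₀]
        field_simp
      · rintro ⟨s, rfl⟩
        exact ⟨s * θ, by rw [map_mul, mul_assoc]⟩

end BaerConics
end
end
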